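/- arXiv:1008.4627 — 11 statements merged into one kernel-verified Lean document; each statement's English description precedes it below -/
import Mathlib

section
/- For every database instance D : T → A → U and every finite set M of matching dependencies (with symmetric similarity relations subsuming equality), there exists an instance D' : T → A → U such that (D,D') ⊨ M. -/
/-- A matching dependency: a finite set `L` of attribute pairs (the similarity
condition to the left of the arrow) and a finite set `R` of attribute pairs
(the pairs of attributes to be matched, to the right of the arrow). -/
structure MD (A : Type*) where
  L : Finset (A × A)
  R : Finset (A × A)

/-- `simPairs sim L D t₁ t₂` : the tuples `t₁, t₂` of instance `D` satisfy the
similarity condition given by the attribute pairs in `L`. -/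
def simPairs {T A U : Type*} (sim : A → A → U → U → Prop)
    (L : Finset (A × A)) (D : T → A → U) (t₁ t₂ : T) : Prop :=
  ∀ p ∈ L, sim p.1 p.2 (D t₁ p.1) (D t₂ p.2)

/-- `Modifiable sim M D t c` : the value of attribute `c` of tuple `t` is
modifiable in instance `D` with respect to the set `M` of MDs (least such predicate). -/
inductive Modifiable {T A U : Type*} (sim : A → A → U → U → Prop)
    (M : Finset (MD A)) (D : T → A → U) : T → A → Prop where
  | left_ne {m : MD A} {t s : T} {c e : A} :
      m ∈ M → (c, e) ∈ m.R → simPairs sim m.L D t s →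
      D t c ≠ D s e → Modifiable sim M D t c
  | left_mod {m : MD A} {t s : T} {c e : A} :
      m ∈ M → (c, e) ∈ m.R → simPairs sim m.L D t s →
      Modifiable sim M D s e → Modifiable sim M D t c
  | right_ne {m : MD A} {t s : T} {c e : A} :
      m ∈ M → (e, c) ∈ m.R → simPairs sim m.L D s t →
      D s e ≠ D t c → Modifiable sim M D t c
  | right_mod {m : MD A} {t s : T} {c e : A} :
      m ∈ M → (e, c) ∈ m.R → simPairs sim m.L D s t →
      Modifiable sim M D s e → Modifiable sim M D t c

/-- `(D, D') ⊨ M`. -/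
def Sat {T A U : Type*} (sim : A → A → U → U → Prop)
    (M : Finset (MD A)) (D D' : T → A → U) : Prop :=
  (∀ m ∈ M, ∀ t₁ t₂ : T, simPairs sim m.L D t₁ t₂ →
      ∀ p ∈ m.R, D' t₁ p.1 = D' t₂ p.2) ∧
  (∀ (t : T) (g : A), ¬ Modifiable sim M D t g → D' t g = D t g)

/-- `D'` is a resolved instance of `D` wrt `M`: there is a finite (possibly empty)
chain of instances `D₁, …, Dₙ` with `(D,D₁) ⊨ M`, `(Dᵢ,Dᵢ₊₁) ⊨ M`, `(Dₙ,D') ⊨ M`,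
and `(D',D') ⊨ M`. -/
def ResolvedInstance {T A U : Type*} (sim : A → A → U → U → Prop)
    (M : Finset (MD A)) (D D' : T → A → U) : Prop :=
  ∃ L : List (T → A → U), List.Chain (Sat sim M) D (L ++ [D']) ∧ Sat sim M D' D'

/-- Number of changed values in going from `D` to `D'`. -/
noncomputable def numChanges {T A U : Type*} (D D' : T → A → U) : ℕ :=
  Nat.card {p : T × A // D p.1 p.2 ≠ D' p.1 p.2}

/-- `D'` is a minimally resolved instance (MRI) of `D` wrt `M`. -/
def IsMRI {T A U : Type*} (sim : A → A → U → U → Prop)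
    (M : Finset (MD A)) (D D' : T → A → U) : Prop :=
  ResolvedInstance sim M D D' ∧
  ∀ D'' : T → A → U, ResolvedInstance sim M D D'' →
    numChanges D D' ≤ numChanges D D''

/-- The edge relation of the similarity graph `G_D` on the vertex set `T × A`. -/
def SimEdge {T A U : Type*} (sim : A → A → U → U → Prop)
    (M : Finset (MD A)) (D : T → A → U) (p q : T × A) : Prop :=
  ∃ m ∈ M, (simPairs sim m.L D p.1 q.1 ∧ (p.2, q.2) ∈ m.R) ∨
           (simPairs sim m.L D q.1 p.1 ∧ (q.2, p.2) ∈ m.R)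

/-- Theorem 3.1 (first part): for every instance `D` and finite set `M` of MDs,
there exists an instance `D'` with `(D, D') ⊨ M`. -/
theorem exists_satisfying_update {T A U : Type*} [Fintype T] [Fintype A]
    (sim : A → A → U → U → Prop)
    (hsym : ∀ (a b : A) (x y : U), sim a b x y → sim b a y x)
    (hsub : ∀ (a b : A) (x y : U), x = y → sim a b x y)
    (M : Finset (MD A)) (D : T → A → U) :
    ∃ D' : T → A → U, Sat sim M D D' := by
  classical
  rcases isEmpty_or_nonempty U with hU | ⟨⟨u⟩⟩
  · exact ⟨D, fun m _ t₁ _ _ p _ => (hU.false (D t₁ p.1)).elim, fun _ _ _ => rfl⟩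
  · refine ⟨fun t c => if Modifiable sim M D t c then u else D t c, ?_, ?_⟩
    · rintro m hm t₁ t₂ hs ⟨c, e⟩ hp
      by_cases h1 : Modifiable sim M D t₁ c
      · have h2 : Modifiable sim M D t₂ e := .right_mod hm hp hs h1
        simp [h1, h2]
      · have h2 : ¬ Modifiable sim M D t₂ e := fun h => h1 (.left_mod hm hp hs h)
        have h3 : D t₁ c = D t₂ e := by
          by_contra h
          exact h1 (.left_ne hm hp hs h)
        simp [h1, h2, h3]
    · intro t g h
      simp [h]
end

section
/- If (D,D') ⊨ M and the vertices (t₁,a) and (t₂,b) lie in the same connected component of the similarity graph G_D, then D' t₁ a = D' t₂ b. In particular, all values of D' on a connected component of G_D are equal to a common value. -/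
/-- If `(D, D') ⊨ M` then `D'` takes a common value on every connected
component of the similarity graph `G_D`. -/
theorem sat_constant_on_components {T A U : Type*} [Fintype T] [Fintype A]
    (sim : A → A → U → U → Prop)
    (hsym : ∀ (a b : A) (x y : U), sim a b x y → sim b a y x)
    (hsub : ∀ (a b : A) (x y : U), x = y → sim a b x y)
    (M : Finset (MD A)) (D D' : T → A → U)
    (hsat : Sat sim M D D')
    (t₁ t₂ : T) (a b : A)
    (hconn : Relation.EqvGen (SimEdge sim M D) (t₁, a) (t₂, b)) :
    D' t₁ a = D' t₂ b := by
  have key : ∀ p q : T × A, Relation.EqvGen (SimEdge sim M D) p q →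
      D' p.1 p.2 = D' q.1 q.2 := by
    intro p q h
    induction h with
    | rel p q h =>
      obtain ⟨m, hm, ⟨hs, hR⟩ | ⟨hs, hR⟩⟩ := h
      · exact hsat.1 m hm _ _ hs _ hR
      · exact (hsat.1 m hm _ _ hs _ hR).symm
    | refl => rfl
    | symm _ _ _ ih => exact ih.symm
    | trans _ _ _ _ _ ih1 ih2 => exact ih1.trans ih2
  exact key _ _ hconn
end

section
/- Call a connected component of the similarity graph G_D broken if it contains two adjacent vertices (s,a) and (t,b) with D s a ≠ D t b. For every function v assigning an arbitrary value of U to each broken component, the instance D' defined by D' t a = v(C) whenever the component C containing (t,a) is broken, and D' t a = D t a otherwise, satisfies (D,D') ⊨ M. In particular, changed values can be chosen arbitrarily, one common value per broken component. -/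
/-- A connected component of the similarity graph `G_D` containing `p` is broken
if it contains two adjacent vertices carrying different values in `D`. -/
def Broken {T A U : Type*} (sim : A → A → U → U → Prop)
    (M : Finset (MD A)) (D : T → A → U) (p : T × A) : Prop :=
  ∃ q r : T × A, Relation.EqvGen (SimEdge sim M D) p q ∧
    SimEdge sim M D q r ∧ D q.1 q.2 ≠ D r.1 r.2

/-- Theorem 3.1 (second part): changed values can be chosen arbitrarily, one
common value per broken connected component of the similarity graph. -/
theorem sat_of_arbitrary_component_values {T A U : Type*} [Fintype T] [Fintype A]
    (sim : A → A → U → U → Prop)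
    (hsym : ∀ (a b : A) (x y : U), sim a b x y → sim b a y x)
    (hsub : ∀ (a b : A) (x y : U), x = y → sim a b x y)
    (M : Finset (MD A)) (D : T → A → U)
    (v : T × A → U)
    (hv : ∀ p q : T × A, Relation.EqvGen (SimEdge sim M D) p q → v p = v q)
    (D' : T → A → U)
    (hbr : ∀ (t : T) (a : A), Broken sim M D (t, a) → D' t a = v (t, a))
    (hnbr : ∀ (t : T) (a : A), ¬ Broken sim M D (t, a) → D' t a = D t a) :
    Sat sim M D D' := by
  have hedge : ∀ p q, SimEdge sim M D p q →
      (Modifiable sim M D p.1 p.2 ↔ Modifiable sim M D q.1 q.2) := by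
    rintro p q ⟨m, hm, ⟨h, hr⟩ | ⟨h, hr⟩⟩
    · exact ⟨fun k => .right_mod hm hr h k, fun k => .left_mod hm hr h k⟩
    · exact ⟨fun k => .left_mod hm hr h k, fun k => .right_mod hm hr h k⟩
  have heqv : ∀ p q, Relation.EqvGen (SimEdge sim M D) p q →
      (Modifiable sim M D p.1 p.2 ↔ Modifiable sim M D q.1 q.2) := by
    intro p q h
    induction h with
    | rel x y h => exact hedge x y h
    | refl x => exact Iff.rfl
    | symm x y _ ih => exact ih.symm
    | trans x y z _ _ ih1 ih2 => exact ih1.trans ih2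
  have hbm : ∀ p, Broken sim M D p → Modifiable sim M D p.1 p.2 := by
    rintro p ⟨q, r, hpq, ⟨m, hm, ⟨h, hr⟩ | ⟨h, hr⟩⟩, hne⟩
    · exact (heqv p q hpq).2 (.left_ne hm hr h hne)
    · exact (heqv p q hpq).2 (.right_ne hm hr h hne.symm)
  refine ⟨?_, fun t g hn => hnbr t g fun hb => hn (hbm _ hb)⟩
  rintro m hm t₁ t₂ h ⟨c, e⟩ hr
  have he : SimEdge sim M D (t₁, c) (t₂, e) := ⟨m, hm, Or.inl ⟨h, hr⟩⟩
  have hE := Relation.EqvGen.rel _ _ he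
  by_cases hb : Broken sim M D (t₁, c)
  · have hb2 : Broken sim M D (t₂, e) := by
      obtain ⟨q, r, h1, h2⟩ := hb
      exact ⟨q, r, .trans _ _ _ (.symm _ _ hE) h1, h2⟩
    exact (hbr _ _ hb).trans ((hv _ _ hE).trans (hbr _ _ hb2).symm)
  · have hb2 : ¬ Broken sim M D (t₂, e) := by
      rintro ⟨q, r, h1, h2⟩
      exact hb ⟨q, r, .trans _ _ _ hE h1, h2⟩
    have heq : D t₁ c = D t₂ e := by
      by_contra hne
      exact hb ⟨_, _, .refl _, he, hne⟩
    exact (hnbr _ _ hb).trans (heq.trans (hnbr _ _ hb2).symm)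
end

section
/- If a connected component of the similarity graph G_D contains two adjacent vertices (s,a) and (t,b) with D s a ≠ D t b, then every vertex (u,c) belonging to that connected component is modifiable in D. -/
/-- Every vertex of a broken connected component of the similarity graph `G_D`
is modifiable in `D`. -/
theorem modifiable_of_broken_component {T A U : Type*} [Fintype T] [Fintype A]
    (sim : A → A → U → U → Prop)
    (hsym : ∀ (a b : A) (x y : U), sim a b x y → sim b a y x)
    (hsub : ∀ (a b : A) (x y : U), x = y → sim a b x y)
    (M : Finset (MD A)) (D : T → A → U)
    (s t : T) (a b : A)
    (hedge : SimEdge sim M D (s, a) (t, b))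
    (hne : D s a ≠ D t b)
    (u : T) (c : A)
    (hconn : Relation.EqvGen (SimEdge sim M D) (u, c) (s, a)) :
    Modifiable sim M D u c := by
  have step : ∀ p q : T × A, SimEdge sim M D p q →
      (Modifiable sim M D p.1 p.2 ↔ Modifiable sim M D q.1 q.2) := by
    rintro p q ⟨m, hm, ⟨h, hr⟩ | ⟨h, hr⟩⟩
    · exact ⟨fun k => .right_mod hm hr h k, fun k => .left_mod hm hr h k⟩
    · exact ⟨fun k => .left_mod hm hr h k, fun k => .right_mod hm hr h k⟩
  have all : ∀ p q : T × A, Relation.EqvGen (SimEdge sim M D) p q →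
      (Modifiable sim M D p.1 p.2 ↔ Modifiable sim M D q.1 q.2) := by
    intro p q h
    induction h with
    | rel x y h => exact step x y h
    | refl x => exact Iff.rfl
    | symm x y _ ih => exact ih.symm
    | trans x y z _ _ ih1 ih2 => exact ih1.trans ih2
  refine (all _ _ hconn).2 ?_
  obtain ⟨m, hm, ⟨h, hr⟩ | ⟨h, hr⟩⟩ := hedge
  · exact .left_ne hm hr h hne
  · exact .right_ne hm hr h hne.symm
end

section
/- For every database instance D : T → A → U and every finite set M of matching dependencies, there exists a resolved instance of D with respect to M. -/
theorem exists_modifiable_ne {T A U : Type*} (sim : A → A → U → U → Prop)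
    (M : Finset (MD A)) (D : T → A → U) (v : U) (t : T) (c : A)
    (h : Modifiable sim M D t c) : ∃ s e, Modifiable sim M D s e ∧ D s e ≠ v := by
  induction h with
  | @left_ne m t s c e hm hR hs hne =>
    by_cases h : D t c = v
    · exact ⟨s, e, .right_ne hm hR hs hne, fun h' => hne (h.trans h'.symm)⟩
    · exact ⟨t, c, .left_ne hm hR hs hne, h⟩
  | left_mod _ _ _ _ ih => exact ih
  | @right_ne m t s c e hm hR hs hne =>
    by_cases h : D t c = v
    · exact ⟨s, e, .left_ne hm hR hs hne, fun h' => hne (h'.trans h.symm)⟩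
    · exact ⟨t, c, .right_ne hm hR hs hne, h⟩
  | right_mod _ _ _ _ ih => exact ih

open Classical in
theorem sat_collapse {T A U : Type*} (sim : A → A → U → U → Prop)
    (M : Finset (MD A)) (D : T → A → U) (v : U) :
    Sat sim M D (fun t c => if Modifiable sim M D t c then v else D t c) := by
  refine ⟨?_, fun t g h => by simp [h]⟩
  rintro m hm t s hs ⟨c, e⟩ hR
  by_cases h1 : Modifiable sim M D t c
  · have h2 : Modifiable sim M D s e := .right_mod hm hR hs h1
    simp [h1, h2]
  · have h2 : ¬ Modifiable sim M D s e := fun h2 => h1 (.left_mod hm hR hs h2)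
    have h3 : D t c = D s e := by
      by_contra h3
      exact h1 (.left_ne hm hR hs h3)
    simp [h1, h2, h3]

theorem sat_self {T A U : Type*} (sim : A → A → U → U → Prop)
    (M : Finset (MD A)) (D : T → A → U) (h : ∀ t c, ¬ Modifiable sim M D t c) :
    Sat sim M D D := by
  refine ⟨?_, fun _ _ _ => rfl⟩
  rintro m hm t s hs ⟨c, e⟩ hR
  by_contra h3
  exact h _ _ (.left_ne hm hR hs h3)

open Classical in
theorem exists_resolved_aux {T A U : Type*} [Fintype T] [Fintype A]
    (sim : A → A → U → U → Prop) (M : Finset (MD A)) (v : U) (n : ℕ) :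
    ∀ D : T → A → U, (Finset.univ.filter fun p : T × A => D p.1 p.2 ≠ v).card = n →
    ∃ D' : T → A → U, ResolvedInstance sim M D D' := by
  induction n using Nat.strong_induction_on with
  | _ n ih =>
    intro D hD
    by_cases h : ∀ t c, ¬ Modifiable sim M D t c
    · have := sat_self sim M D h
      exact ⟨D, [], List.IsChain.cons_cons this (List.IsChain.singleton _), this⟩
    · push Not at h
      obtain ⟨t, c, h⟩ := h
      obtain ⟨s, e, hse, hne⟩ := exists_modifiable_ne sim M D v t c h
      obtain ⟨D', L, hL, hS⟩ := ih _ (by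
        rw [← hD]
        refine Finset.card_lt_card (Finset.ssubset_iff_of_subset ?_ |>.2 ⟨(s, e), ?_, ?_⟩)
        · intro p hp
          simp only [Finset.mem_filter, Finset.mem_univ, true_and] at hp ⊢
          intro hv
          apply hp
          split_ifs
          · rfl
          · exact hv
        · simpa using hne
        · simp [hse]) (fun t c => if Modifiable sim M D t c then v else D t c) rfl
      exact ⟨D', _ :: L, List.IsChain.cons_cons (sat_collapse sim M D v) hL, hS⟩

/-- Theorem 3.2: for every instance `D` and finite set `M` of MDs there exists
a resolved instance of `D` with respect to `M`. -/
theorem exists_resolved_instance {T A U : Type*} [Fintype T] [Fintype A]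
    (sim : A → A → U → U → Prop)
    (hsym : ∀ (a b : A) (x y : U), sim a b x y → sim b a y x)
    (hsub : ∀ (a b : A) (x y : U), x = y → sim a b x y)
    (M : Finset (MD A)) (D : T → A → U) :
    ∃ D' : T → A → U, ResolvedInstance sim M D D' := by
  by_cases h : ∀ t c, ¬ Modifiable sim M D t c
  · have := sat_self sim M D h
    exact ⟨D, [], List.IsChain.cons_cons this (List.IsChain.singleton _), this⟩
  · push Not at h
    obtain ⟨t, c, _⟩ := h
    exact exists_resolved_aux sim M (D t c) _ D rfl
end

section
/- If D is stable for M, i.e. (D,D) ⊨ M, then no pair (t,a) ∈ T × A is modifiable in D, and for every instance D' one has (D,D') ⊨ M if and only if D' = D; consequently D is the unique resolved instance of itself with respect to M. -/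
/-- If `D` is stable for `M`, then no value of `D` is modifiable,
`(D, D') ⊨ M` holds exactly for `D' = D`, and `D` is the unique resolved
instance of itself wrt `M`. -/
theorem stable_unique_resolved {T A U : Type*} [Fintype T] [Fintype A]
    (sim : A → A → U → U → Prop)
    (hsym : ∀ (a b : A) (x y : U), sim a b x y → sim b a y x)
    (hsub : ∀ (a b : A) (x y : U), x = y → sim a b x y)
    (M : Finset (MD A)) (D : T → A → U)
    (hstable : Sat sim M D D) :
    (∀ (t : T) (a : A), ¬ Modifiable sim M D t a) ∧
    (∀ D' : T → A → U, Sat sim M D D' ↔ D' = D) ∧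
    (∀ D' : T → A → U, ResolvedInstance sim M D D' ↔ D' = D) := by
  have h1 : ∀ (t : T) (a : A), ¬ Modifiable sim M D t a := by
    intro t a h
    induction h with
    | left_ne hm hR hs hne => exact hne (hstable.1 _ hm _ _ hs _ hR)
    | left_mod _ _ _ _ ih => exact ih
    | right_ne hm hR hs hne => exact hne (hstable.1 _ hm _ _ hs _ hR)
    | right_mod _ _ _ _ ih => exact ih
  have h2 : ∀ D' : T → A → U, Sat sim M D D' ↔ D' = D := by
    intro D'
    constructor
    · intro h
      funext t a
      exact h.2 t a (h1 t a)
    · rintro rfl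
      exact hstable
  refine ⟨h1, h2, ?_⟩
  intro D'
  constructor
  · rintro ⟨L, hL, -⟩
    induction L with
    | nil =>
      cases hL with
      | cons_cons h _ => exact (h2 _).1 h
    | cons E L ih =>
      cases hL with
      | cons_cons h h' =>
        have hE := (h2 _).1 h
        subst hE
        exact ih h'
  · rintro rfl
    exact ⟨[], List.IsChain.cons_cons hstable (List.IsChain.singleton _), hstable⟩
end

section
/- Let M be a non-interacting finite set of MDs and suppose D' changes only modifiable values of D (D' t a = D t a whenever (t,a) is not modifiable in D with respect to M). Then D' is a resolved instance of D with respect to M if and only if TS((t₁,a),(t₂,b)) implies D' t₁ a = D' t₂ b for all (t₁,a),(t₂,b) ∈ T × A, where TS is the equivalence relation generated by the union of the tuple-attribute relations ≈'_m for m ∈ M. -/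
/-- A set of MDs is non-interacting if no attribute occurring to the right of
the arrow of one MD occurs to the left of the arrow of another. -/
def NonInteracting {A : Type*} (M : Finset (MD A)) : Prop :=
  ∀ m₁ ∈ M, ∀ m₂ ∈ M, ∀ p ∈ m₁.R, ∀ q ∈ m₂.L,
    p.1 ≠ q.1 ∧ p.1 ≠ q.2 ∧ p.2 ≠ q.1 ∧ p.2 ≠ q.2

/-- `TSrel sim M D` : the equivalence relation on tuple-attribute pairs
generated by the union of the relations `≈'_m`, `m ∈ M`. -/
def TSrel {T A U : Type*} (sim : A → A → U → U → Prop)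
    (M : Finset (MD A)) (D : T → A → U) : T × A → T × A → Prop :=
  Relation.EqvGen
    (fun p q : T × A => ∃ m ∈ M, simPairs sim m.L D p.1 q.1 ∧ (p.2, q.2) ∈ m.R)

theorem Modifiable.mem_R {T A U : Type*} {sim : A → A → U → U → Prop}
    {M : Finset (MD A)} {D : T → A → U} {t : T} {c : A} (h : Modifiable sim M D t c) :
    ∃ m ∈ M, ∃ p ∈ m.R, p.1 = c ∨ p.2 = c := by
  cases h with
  | left_ne hm hR _ _ => exact ⟨_, hm, _, hR, Or.inl rfl⟩
  | left_mod hm hR _ _ => exact ⟨_, hm, _, hR, Or.inl rfl⟩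
  | right_ne hm hR _ _ => exact ⟨_, hm, _, hR, Or.inr rfl⟩
  | right_mod hm hR _ _ => exact ⟨_, hm, _, hR, Or.inr rfl⟩

/-- Lemma A.2: for a non-interacting set `M` of MDs and `D'` changing only
modifiable values, `D'` is a resolved instance of `D` iff `D'` is constant on
every equivalence class of `TS`. -/
theorem resolved_iff_constant_on_TS {T A U : Type*} [Fintype T] [Fintype A]
    (sim : A → A → U → U → Prop)
    (hsym : ∀ (a b : A) (x y : U), sim a b x y → sim b a y x)
    (hsub : ∀ (a b : A) (x y : U), x = y → sim a b x y)
    (M : Finset (MD A)) (hni : NonInteracting M)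
    (D D' : T → A → U)
    (hmod : ∀ (t : T) (a : A), ¬ Modifiable sim M D t a → D' t a = D t a) :
    ResolvedInstance sim M D D' ↔
      ∀ p q : T × A, TSrel sim M D p q → D' p.1 p.2 = D' q.1 q.2 := by
  have key : ∀ m ∈ M, ∀ t₁ t₂ : T, simPairs sim m.L D' t₁ t₂ ↔ simPairs sim m.L D t₁ t₂ := by
    intro m hm t₁ t₂
    have h1 : ∀ q ∈ m.L, ∀ t, D' t q.1 = D t q.1 ∧ D' t q.2 = D t q.2 := by
      intro q hq t
      constructor
      · apply hmod
        intro h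
        obtain ⟨m', hm', p, hp, h⟩ := h.mem_R
        have := hni m' hm' m hm p hp q hq
        tauto
      · apply hmod
        intro h
        obtain ⟨m', hm', p, hp, h⟩ := h.mem_R
        have := hni m' hm' m hm p hp q hq
        tauto
    unfold simPairs
    refine forall₂_congr fun q hq => ?_
    rw [(h1 q hq t₁).1, (h1 q hq t₂).2]
  constructor
  · rintro ⟨_, _, hS⟩ p q h
    induction h with
    | rel x y h =>
      obtain ⟨m, hm, hs, hR⟩ := h
      exact hS.1 m hm _ _ ((key m hm _ _).2 hs) _ hR
    | refl x => rfl
    | symm x y _ ih => exact ih.symm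
    | trans x y z _ _ ih1 ih2 => exact ih1.trans ih2
  · intro h
    have hc : ∀ m ∈ M, ∀ t₁ t₂ : T, simPairs sim m.L D t₁ t₂ →
        ∀ p ∈ m.R, D' t₁ p.1 = D' t₂ p.2 := by
      intro m hm t₁ t₂ hs p hp
      exact h (t₁, p.1) (t₂, p.2) (Relation.EqvGen.rel _ _ ⟨m, hm, hs, hp⟩)
    refine ⟨[], ?_, fun m hm t₁ t₂ hs => hc m hm t₁ t₂ ((key m hm _ _).1 hs), fun _ _ _ => rfl⟩
    have hS : Sat sim M D D' := ⟨hc, hmod⟩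
    exact List.IsChain.cons_cons hS (List.IsChain.singleton _)
end

section
/- Let M be a non-interacting finite set of MDs and let TS be the equivalence relation on T × A generated by the union of the tuple-attribute relations ≈'_m for m ∈ M. Then D' is a minimally resolved instance (MRI) of D with respect to M if and only if for every equivalence class E of TS there is a value v_E that is most frequent in the multiset of values {D t a : (t,a) ∈ E} (counted with multiplicity) such that D' t a = v_E for every (t,a) ∈ E. -/
theorem aux_mf {X U : Type*} [Fintype X] (s : Setoid X) (f : X → U)
    (Res : (X → U) → Prop)
    (hRes : ∀ g, Res g ↔ ((∀ x y, s x y → g x = g y) ∧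
      (∀ x, (∀ y, s x y → f y = f x) → g x = f x))) (g : X → U) :
    (Res g ∧ ∀ h, Res h → Nat.card {x // f x ≠ g x} ≤ Nat.card {x // f x ≠ h x}) ↔
    ∀ p : X, ∃ v : U, (∃ q, s p q ∧ f q = v) ∧
      (∀ w, Nat.card {q // s p q ∧ f q = w} ≤ Nat.card {q // s p q ∧ f q = v}) ∧
      (∀ q, s p q → g q = v) := by
  classical
  let cnt : Quotient s → U → ℕ := fun c w =>
    (Finset.univ.filter (fun x => f x = w ∧ Quotient.mk s x = c)).card
  have hcnt : ∀ p w, Nat.card {q // s p q ∧ f q = w} = cnt (Quotient.mk s p) w := by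
    intro p w
    rw [Nat.card_eq_fintype_card, Fintype.card_subtype]
    congr 1
    ext x
    simp only [Finset.mem_filter, Finset.mem_univ, true_and, Quotient.eq]
    constructor
    · rintro ⟨h1, h2⟩; exact ⟨h2, s.symm h1⟩
    · rintro ⟨h1, h2⟩; exact ⟨s.symm h2, h1⟩
  simp only [hcnt]
  have hpos : ∀ p, 0 < cnt (Quotient.mk s p) (f p) := by
    intro p
    apply Finset.card_pos.2
    exact ⟨p, by simp⟩
  have hocc : ∀ p w, 0 < cnt (Quotient.mk s p) w → ∃ q, s p q ∧ f q = w := by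
    intro p w h
    obtain ⟨q, hq⟩ := Finset.card_pos.1 h
    simp only [Finset.mem_filter, Finset.mem_univ, true_and, Quotient.eq] at hq
    exact ⟨q, s.symm hq.2, hq.1⟩
  -- reformulation of most frequent
  have hR : (∀ p : X, ∃ v : U, (∃ q, s p q ∧ f q = v) ∧
      (∀ w, cnt (Quotient.mk s p) w ≤ cnt (Quotient.mk s p) v) ∧
      (∀ q, s p q → g q = v)) ↔ ((∀ x y, s x y → g x = g y) ∧
      ∀ p w, cnt (Quotient.mk s p) w ≤ cnt (Quotient.mk s p) (g p)) := by
    constructor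
    · intro h
      refine ⟨fun x y hxy => ?_, fun p w => ?_⟩
      · obtain ⟨v, -, -, hv⟩ := h x
        rw [hv x (s.refl x), hv y hxy]
      · obtain ⟨v, -, h2, hv⟩ := h p
        rw [hv p (s.refl p)]; exact h2 w
    · rintro ⟨h1, h2⟩ p
      exact ⟨g p, hocc p _ (lt_of_lt_of_le (hpos p) (h2 p _)), h2 p, fun q hq => (h1 p q hq).symm⟩
  rw [hR]
  have hmfRes : ∀ g : X → U, ((∀ x y, s x y → g x = g y) ∧
      ∀ p w, cnt (Quotient.mk s p) w ≤ cnt (Quotient.mk s p) (g p)) → Res g := by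
    rintro g ⟨h1, h2⟩
    rw [hRes]
    refine ⟨h1, fun x hx => ?_⟩
    obtain ⟨q, hq, hq'⟩ := hocc x _ (lt_of_lt_of_le (hpos x) (h2 x _))
    rw [← hq', hx q hq]
  have hsum : ∀ g : X → U, (∀ x y, s x y → g x = g y) →
      ∃ G : Quotient s → U, (∀ x, G (Quotient.mk s x) = g x) ∧
      Nat.card {x // f x ≠ g x} + ∑ c, cnt c (G c) = Fintype.card X := by
    intro g hg
    refine ⟨Quotient.lift g hg, fun x => rfl, ?_⟩
    rw [Nat.card_eq_fintype_card, Fintype.card_subtype]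
    have e1 := Finset.card_eq_sum_card_fiberwise (f := fun x => Quotient.mk s x)
      (s := Finset.univ.filter (fun x => f x = g x)) (t := Finset.univ) (by intro x _; simp)
    have e2 : ∑ c, cnt c (Quotient.lift g hg c) = (Finset.univ.filter (fun x => f x = g x)).card := by
      rw [e1]
      refine Finset.sum_congr rfl fun c _ => ?_
      rw [Finset.filter_filter]
      show Finset.card _ = _
      congr 1
      ext x
      simp only [Finset.mem_filter, Finset.mem_univ, true_and]
      constructor
      · rintro ⟨a, rfl⟩; exact ⟨a, rfl⟩
      · rintro ⟨a, rfl⟩; exact ⟨a, rfl⟩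
    rw [e2, add_comm]
    exact Finset.card_filter_add_card_filter_not _
  constructor
  · rintro ⟨hg, hmin⟩
    have hgc := ((hRes g).1 hg).1
    refine ⟨hgc, ?_⟩
    have hex : ∀ c : Quotient s, ∃ v, ∀ w, cnt c w ≤ cnt c v := by
      intro c
      obtain ⟨p, rfl⟩ := Quotient.exists_rep c
      obtain ⟨x, -, hx⟩ := Finset.exists_max_image Finset.univ
        (fun x => cnt (Quotient.mk s p) (f x)) ⟨p, Finset.mem_univ _⟩
      refine ⟨f x, fun w => ?_⟩
      rcases Nat.eq_zero_or_pos (cnt (Quotient.mk s p) w) with h0 | h0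
      · omega
      · obtain ⟨q, -, rfl⟩ := hocc p w h0
        exact hx q (Finset.mem_univ _)
    choose H hH using hex
    have hHmf : (∀ x y, s x y → H (Quotient.mk s x) = H (Quotient.mk s y)) :=
      fun x y h => by rw [Quotient.sound h]
    have hle := hmin (fun x => H (Quotient.mk s x)) (hmfRes _ ⟨hHmf, fun p w => hH _ w⟩)
    obtain ⟨G, hG, hGs⟩ := hsum g hgc
    obtain ⟨H', hH', hHs⟩ := hsum _ hHmf
    obtain rfl : H' = H := by
      funext c
      obtain ⟨p, rfl⟩ := Quotient.exists_rep c
      exact hH' p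
    have hall : ∀ c ∈ Finset.univ, cnt c (G c) ≤ cnt c (H' c) := fun c _ => hH c _
    have heq := (Finset.sum_eq_sum_iff_of_le hall).1
      (le_antisymm (Finset.sum_le_sum hall) (by omega))
    intro p w
    rw [← hG p, heq _ (Finset.mem_univ _)]
    exact hH _ w
  · rintro ⟨h1, h2⟩
    refine ⟨hmfRes g ⟨h1, h2⟩, fun h hh => ?_⟩
    obtain ⟨G, hG, hGs⟩ := hsum g h1
    obtain ⟨H, hH, hHs⟩ := hsum h ((hRes h).1 hh).1
    have : ∑ c, cnt c (H c) ≤ ∑ c, cnt c (G c) := by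
      refine Finset.sum_le_sum fun c _ => ?_
      obtain ⟨p, rfl⟩ := Quotient.exists_rep c
      rw [hG]; exact h2 p _
    omega

theorem aux_notmod {T A U : Type*} (sim : A → A → U → U → Prop)
    (M : Finset (MD A)) (D : T → A → U)
    (h : ∀ p q, TSrel sim M D p q → D p.1 p.2 = D q.1 q.2) (t : T) (c : A) :
    ¬ Modifiable sim M D t c := by
  intro hm
  induction hm with
  | left_ne hm hR hs hne => exact hne (h (_, _) (_, _) (Relation.EqvGen.rel _ _ ⟨_, hm, hs, hR⟩))
  | left_mod _ _ _ _ ih => exact ih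
  | right_ne hm hR hs hne => exact hne (h (_, _) (_, _) (Relation.EqvGen.rel _ _ ⟨_, hm, hs, hR⟩))
  | right_mod _ _ _ _ ih => exact ih

theorem aux_mod_ne {T A U : Type*} (sim : A → A → U → U → Prop)
    (M : Finset (MD A)) (D : T → A → U) (t : T) (c : A) (hm : Modifiable sim M D t c) :
    ∃ q, TSrel sim M D (t, c) q ∧ D q.1 q.2 ≠ D t c := by
  by_contra! hcon
  suffices H : ∀ t c, Modifiable sim M D t c →
      ¬ (∀ q q', TSrel sim M D (t, c) q → TSrel sim M D (t, c) q' → D q.1 q.2 = D q'.1 q'.2) from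
    H t c hm fun q q' hq hq' => by rw [hcon q hq, hcon q' hq']
  clear hcon hm t c
  intro t c hm
  induction hm with
  | left_ne hm hR hs hne =>
    intro h
    exact hne (h (_, _) (_, _) (Relation.EqvGen.refl _) (Relation.EqvGen.rel _ _ ⟨_, hm, hs, hR⟩))
  | @left_mod m t s c e hm hR hs _ ih =>
    intro h
    have e1 : TSrel sim M D (t, c) (s, e) := Relation.EqvGen.rel _ _ ⟨_, hm, hs, hR⟩
    exact ih fun q q' hq hq' => h q q' (e1.trans _ _ _ hq) (e1.trans _ _ _ hq')
  | right_ne hm hR hs hne =>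
    intro h
    exact hne (h (_, _) (_, _) ((Relation.EqvGen.rel _ _ ⟨_, hm, hs, hR⟩ : TSrel sim M D (_, _) (_, _)).symm)
      (Relation.EqvGen.refl _))
  | @right_mod m t s c e hm hR hs _ ih =>
    intro h
    have e1 : TSrel sim M D (t, c) (s, e) :=
      Relation.EqvGen.symm _ _ (Relation.EqvGen.rel _ _ ⟨_, hm, hs, hR⟩)
    exact ih fun q q' hq hq' => h q q' (e1.trans _ _ _ hq) (e1.trans _ _ _ hq')

theorem aux_ne_mod {T A U : Type*} (sim : A → A → U → U → Prop)
    (M : Finset (MD A)) (D : T → A → U) (p q : T × A) (h : TSrel sim M D p q) :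
    (Modifiable sim M D p.1 p.2 ↔ Modifiable sim M D q.1 q.2) ∧
    (D p.1 p.2 ≠ D q.1 q.2 → Modifiable sim M D p.1 p.2) := by
  induction h with
  | rel x y h =>
    obtain ⟨m, hm, hs, hR⟩ := h
    exact ⟨⟨fun h => .right_mod hm hR hs h, fun h => .left_mod hm hR hs h⟩,
      fun h => .left_ne hm hR hs h⟩
  | refl x => exact ⟨Iff.rfl, fun h => absurd rfl h⟩
  | symm x y _ ih => exact ⟨ih.1.symm, fun h => ih.1.1 (ih.2 h.symm)⟩
  | trans x y z _ _ ih1 ih2 =>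
    refine ⟨ih1.1.trans ih2.1, fun h => ?_⟩
    by_cases e : D x.1 x.2 = D y.1 y.2
    · exact ih1.1.2 (ih2.2 (e ▸ h))
    · exact ih1.2 e

theorem aux_sat_iff {T A U : Type*} (sim : A → A → U → U → Prop)
    (M : Finset (MD A)) (D D' : T → A → U) :
    Sat sim M D D' ↔ ((∀ p q, TSrel sim M D p q → D' p.1 p.2 = D' q.1 q.2) ∧
      (∀ p : T × A, (∀ q, TSrel sim M D p q → D q.1 q.2 = D p.1 p.2) →
        D' p.1 p.2 = D p.1 p.2)) := by
  constructor
  · rintro ⟨h1, h2⟩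
    refine ⟨fun p q h => ?_, fun p hp => h2 _ _ fun hm => ?_⟩
    · induction h with
      | rel x y h =>
        obtain ⟨m, hm, hs, hR⟩ := h
        exact h1 m hm _ _ hs _ hR
      | refl x => rfl
      | symm x y _ ih => exact ih.symm
      | trans x y z _ _ ih1 ih2 => exact ih1.trans ih2
    · obtain ⟨q, hq, hne⟩ := aux_mod_ne sim M D _ _ hm
      exact hne (hp q hq)
  · rintro ⟨h1, h2⟩
    refine ⟨fun m hm t₁ t₂ hs p hp => h1 (t₁, p.1) (t₂, p.2)
      (Relation.EqvGen.rel _ _ ⟨m, hm, hs, hp⟩), fun t g hn => h2 (t, g) fun q hq => ?_⟩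
    by_contra hne
    exact hn ((aux_ne_mod sim M D _ _ hq).2 fun e => hne e.symm)

theorem aux_mod_R {T A U : Type*} (sim : A → A → U → U → Prop)
    (M : Finset (MD A)) (D : T → A → U) (t : T) (c : A) (hm : Modifiable sim M D t c) :
    ∃ m ∈ M, ∃ p ∈ m.R, p.1 = c ∨ p.2 = c := by
  cases hm with
  | left_ne hm hR _ _ => exact ⟨_, hm, _, hR, .inl rfl⟩
  | left_mod hm hR _ _ => exact ⟨_, hm, _, hR, .inl rfl⟩
  | right_ne hm hR _ _ => exact ⟨_, hm, _, hR, .inr rfl⟩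
  | right_mod hm hR _ _ => exact ⟨_, hm, _, hR, .inr rfl⟩

theorem aux_sim {T A U : Type*} (sim : A → A → U → U → Prop)
    (M : Finset (MD A)) (hni : NonInteracting M) (D D' : T → A → U) (h : Sat sim M D D')
    (m : MD A) (hm : m ∈ M) (t₁ t₂ : T) :
    simPairs sim m.L D' t₁ t₂ ↔ simPairs sim m.L D t₁ t₂ := by
  unfold simPairs
  refine forall₂_congr fun p hp => ?_
  rw [h.2 t₁ p.1, h.2 t₂ p.2]
  · intro hmod
    obtain ⟨m₁, hm₁, q, hq, e⟩ := aux_mod_R sim M D _ _ hmod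
    have := hni m₁ hm₁ m hm q hq p hp
    tauto
  · intro hmod
    obtain ⟨m₁, hm₁, q, hq, e⟩ := aux_mod_R sim M D _ _ hmod
    have := hni m₁ hm₁ m hm q hq p hp
    tauto

theorem aux_TS {T A U : Type*} (sim : A → A → U → U → Prop)
    (M : Finset (MD A)) (hni : NonInteracting M) (D D' : T → A → U) (h : Sat sim M D D') :
    TSrel sim M D' = TSrel sim M D := by
  unfold TSrel
  congr 1
  funext p q
  apply propext
  refine exists_congr fun m => and_congr_right fun hm => and_congr_left fun _ => ?_
  exact aux_sim sim M hni D D' h m hm _ _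

theorem aux_stable {T A U : Type*} (sim : A → A → U → U → Prop)
    (M : Finset (MD A)) (hni : NonInteracting M) (D D' D'' : T → A → U) (h : Sat sim M D D')
    (h' : Sat sim M D' D'') : D'' = D' := by
  funext t c
  refine h'.2 t c (aux_notmod sim M D' ?_ t c)
  rw [aux_TS sim M hni D D' h]
  exact ((aux_sat_iff sim M D D').1 h).1

theorem aux_chain {T A U : Type*} (sim : A → A → U → U → Prop)
    (M : Finset (MD A)) (hni : NonInteracting M) (D' : T → A → U) :
    ∀ (L : List (T → A → U)) (D : T → A → U),
      List.IsChain (Sat sim M) (D :: (L ++ [D'])) → Sat sim M D D' := by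
  intro L
  induction L with
  | nil => intro D h; simpa using h
  | cons D₁ L ih =>
    intro D h
    rw [List.cons_append, List.isChain_cons_cons] at h
    have := aux_stable sim M hni D D₁ D' h.1 (ih D₁ h.2)
    rw [this]; exact h.1

theorem aux_res {T A U : Type*} (sim : A → A → U → U → Prop)
    (M : Finset (MD A)) (hni : NonInteracting M) (D D' : T → A → U) :
    ResolvedInstance sim M D D' ↔ Sat sim M D D' := by
  constructor
  · rintro ⟨L, hL, -⟩
    exact aux_chain sim M hni D' L D hL
  · intro h
    refine ⟨[], ?_, ?_, fun _ _ _ => rfl⟩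
    · show List.IsChain _ _
      simpa using h
    · intro m hm t₁ t₂ hs
      exact h.1 m hm t₁ t₂ ((aux_sim sim M hni D D' h m hm _ _).1 hs)

/-- Corollary A.1: for a non-interacting set `M` of MDs, `D'` is an MRI of `D`
iff on each equivalence class of `TS` it takes a constant value that is most
frequent among the `D`-values of the class (counted with multiplicity). -/
theorem mri_iff_most_frequent {T A U : Type*} [Fintype T] [Fintype A]
    (sim : A → A → U → U → Prop)
    (hsym : ∀ (a b : A) (x y : U), sim a b x y → sim b a y x)
    (hsub : ∀ (a b : A) (x y : U), x = y → sim a b x y)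
    (M : Finset (MD A)) (hni : NonInteracting M)
    (D D' : T → A → U) :
    IsMRI sim M D D' ↔
      ∀ p : T × A, ∃ v : U,
        (∃ q : T × A, TSrel sim M D p q ∧ D q.1 q.2 = v) ∧
        (∀ w : U,
          Nat.card {q : T × A // TSrel sim M D p q ∧ D q.1 q.2 = w} ≤
          Nat.card {q : T × A // TSrel sim M D p q ∧ D q.1 q.2 = v}) ∧
        (∀ q : T × A, TSrel sim M D p q → D' q.1 q.2 = v) := by
  have key := aux_mf (Relation.EqvGen.setoid
    (fun p q : T × A => ∃ m ∈ M, simPairs sim m.L D p.1 q.1 ∧ (p.2, q.2) ∈ m.R))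
    (fun p : T × A => D p.1 p.2) (fun g => ResolvedInstance sim M D (fun t a => g (t, a)))
    (fun g => by rw [aux_res sim M hni, aux_sat_iff]; rfl) (fun p : T × A => D' p.1 p.2)
  refine Iff.trans ?_ key
  unfold IsMRI numChanges
  refine and_congr_right fun _ => ⟨fun h g hg => h _ hg, fun h D'' hD => ?_⟩
  exact h (fun p => D'' p.1 p.2) hD
end

section
/- Let the attribute set be A = {α, β}, let k ≥ 1 and let T have exactly 2k tuple identifiers t₀,…,t_{2k−1}. Let M = {m} where L(m) = {(α,α)} with a symmetric similarity relation ≈ subsuming equality, and R(m) = {(β,β)}. Suppose D satisfies: D tᵢ α ≈ D tⱼ α holds if and only if i = j or {i,j} = {2l, 2l+1} for some l < k; and D t_{2l} β ≠ D t_{2l+1} β for every l < k. Then D has exactly 2^k minimally resolved instances with respect to M. -/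
/-- The MD of the example. -/
abbrev exM : Finset (MD (Fin 2)) :=
  ({⟨({((0 : Fin 2), (0 : Fin 2))} : Finset (Fin 2 × Fin 2)),
           ({((1 : Fin 2), (1 : Fin 2))} : Finset (Fin 2 × Fin 2))⟩} :
          Finset (MD (Fin 2)))

theorem exM_mod {T U : Type*} (sim : Fin 2 → Fin 2 → U → U → Prop) (D : T → Fin 2 → U)
    (t : T) (c : Fin 2) (h : Modifiable sim exM D t c) : c = 1 := by
  cases h <;> simp_all [exM]

theorem exM_sat {T U : Type*} (sim : Fin 2 → Fin 2 → U → U → Prop) (D D' : T → Fin 2 → U)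
    (h : Sat sim exM D D') (t : T) : D' t 0 = D t 0 := by
  refine h.2 t 0 fun hm => ?_
  have := exM_mod sim D t 0 hm
  simp at this

theorem exM_chain {T U : Type*} (sim : Fin 2 → Fin 2 → U → U → Prop) (D' : T → Fin 2 → U)
    (L : List (T → Fin 2 → U)) : ∀ D : T → Fin 2 → U,
    List.IsChain (Sat sim exM) (D :: (L ++ [D'])) → ∀ t, D' t 0 = D t 0 := by
  induction L with
  | nil =>
    intro D h t
    simp at h
    exact exM_sat sim D D' h t
  | cons E L ih =>
    intro D h t
    rw [List.cons_append, List.isChain_cons_cons] at h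
    rw [ih E h.2 t, exM_sat sim D E h.1 t]

def evn {k : ℕ} (l : Fin k) : Fin (2 * k) := ⟨2 * l.val, by omega⟩
def odd' {k : ℕ} (l : Fin k) : Fin (2 * k) := ⟨2 * l.val + 1, by omega⟩
def hlf {k : ℕ} (i : Fin (2 * k)) : Fin k := ⟨i.val / 2, by omega⟩

theorem hlf_evn {k : ℕ} (l : Fin k) : hlf (evn l) = l := by
  ext; simp [hlf, evn]
theorem hlf_odd {k : ℕ} (l : Fin k) : hlf (odd' l) = l := by
  ext; simp [hlf, odd']; omega
theorem evn_or_odd {k : ℕ} (i : Fin (2 * k)) : i = evn (hlf i) ∨ i = odd' (hlf i) := by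
  simp only [Fin.ext_iff, hlf, evn, odd']; omega
theorem odd_ne_evn {k : ℕ} (l l' : Fin k) : odd' l ≠ evn l' := by
  simp only [ne_eq, Fin.ext_iff, evn, odd']; omega

section
variable {U : Type*} {k : ℕ} (sim : Fin 2 → Fin 2 → U → U → Prop)
    (D : Fin (2 * k) → Fin 2 → U)
    (hA : ∀ i j : Fin (2 * k), sim 0 0 (D i 0) (D j 0) ↔ hlf i = hlf j)
    (hB : ∀ l : Fin k, D (evn l) 1 ≠ D (odd' l) 1)

theorem resolved_iff (hA : ∀ i j : Fin (2 * k), sim 0 0 (D i 0) (D j 0) ↔ hlf i = hlf j)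
    (hB : ∀ l : Fin k, D (evn l) 1 ≠ D (odd' l) 1) (D' : Fin (2 * k) → Fin 2 → U) :
    ResolvedInstance sim exM D D' ↔
      (∀ i, D' i 0 = D i 0) ∧ ∀ l, D' (evn l) 1 = D' (odd' l) 1 := by
  constructor
  · rintro ⟨L, hc, hs⟩
    have h0 := exM_chain sim D' L D hc
    refine ⟨h0, fun l => ?_⟩
    refine hs.1 _ (Finset.mem_singleton_self _) (evn l) (odd' l) ?_ (1, 1) (by simp)
    intro p hp
    simp at hp
    subst hp
    simp only [h0]
    rw [hA, hlf_evn, hlf_odd]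
  · rintro ⟨h0, h1⟩
    have key : ∀ i j, hlf i = hlf j → D' i 1 = D' j 1 := by
      intro i j h
      rcases evn_or_odd i with hi | hi <;> rcases evn_or_odd j with hj | hj <;>
        rw [hi, hj, h] <;> simp [h1]
    refine ⟨[], ?_, ?_, fun _ _ _ => rfl⟩
    · change List.IsChain _ _
      simp only [List.nil_append, List.isChain_cons_cons, List.isChain_singleton, and_true]
      constructor
      · intro m hm t s hts p hp
        simp only [exM, Finset.mem_singleton] at hm
        subst hm
        simp at hp
        subst hp
        exact key _ _ ((hA _ _).1 (hts (0, 0) (by simp)))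
      · intro t g hm
        obtain rfl | rfl : g = 0 ∨ g = 1 := by omega
        · exact h0 t
        · exfalso
          apply hm
          have hs : ∀ s, hlf t = hlf s → simPairs sim {((0 : Fin 2), (0 : Fin 2))} D t s := by
            intro s h p hp
            simp at hp
            subst hp
            exact (hA _ _).2 h
          rcases evn_or_odd t with ht | ht
          · refine Modifiable.left_ne (s := odd' (hlf t)) (e := 1)
              (Finset.mem_singleton_self _) (by simp) (hs _ (hlf_odd _).symm) ?_
            have := hB (hlf t)
            rwa [← ht] at this
          · refine Modifiable.left_ne (s := evn (hlf t)) (e := 1)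
              (Finset.mem_singleton_self _) (by simp) (hs _ (hlf_evn _).symm) ?_
            have := (hB (hlf t)).symm
            rwa [← ht] at this
    · intro m hm t s hts p hp
      simp only [exM, Finset.mem_singleton] at hm
      subst hm
      simp at hp
      subst hp
      have := hts (0, 0) (by simp)
      simp only [h0] at this
      exact key _ _ ((hA _ _).1 this)

open Classical in
/-- A changed position in each pair. -/
noncomputable def pick (hB : ∀ l : Fin k, D (evn l) 1 ≠ D (odd' l) 1)
    (D' : Fin (2 * k) → Fin 2 → U) (h1 : ∀ l, D' (evn l) 1 = D' (odd' l) 1) (l : Fin k) :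
    {p : Fin (2 * k) × Fin 2 // D p.1 p.2 ≠ D' p.1 p.2} :=
  if h : D (evn l) 1 ≠ D' (evn l) 1 then ⟨(evn l, 1), h⟩
  else ⟨(odd' l, 1), by
    have h2 := hB l
    rw [not_not] at h
    rw [h, h1] at h2
    exact h2.symm⟩

theorem hlf_pick (D' : Fin (2 * k) → Fin 2 → U) (h1 : ∀ l, D' (evn l) 1 = D' (odd' l) 1)
    (l : Fin k) : hlf (pick D hB D' h1 l).1.1 = l := by
  unfold pick
  split_ifs
  · exact hlf_evn l
  · exact hlf_odd l

theorem pick_inj (D' : Fin (2 * k) → Fin 2 → U) (h1 : ∀ l, D' (evn l) 1 = D' (odd' l) 1) :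
    Function.Injective (pick D hB D' h1) := fun a b h => by
  rw [← hlf_pick D hB D' h1 a, h, hlf_pick]

theorem num_ge (hB : ∀ l : Fin k, D (evn l) 1 ≠ D (odd' l) 1)
    (D' : Fin (2 * k) → Fin 2 → U) (h1 : ∀ l, D' (evn l) 1 = D' (odd' l) 1) :
    k ≤ numChanges D D' := by
  have := Nat.card_le_card_of_injective _ (pick_inj D hB D' h1)
  simpa [numChanges] using this

theorem num_eq (hB : ∀ l : Fin k, D (evn l) 1 ≠ D (odd' l) 1)
    (D' : Fin (2 * k) → Fin 2 → U) (h1 : ∀ l, D' (evn l) 1 = D' (odd' l) 1)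
    (hn : numChanges D D' ≤ k) (l : Fin k) :
    D' (evn l) 1 = D (evn l) 1 ∨ D' (evn l) 1 = D (odd' l) 1 := by
  by_contra! hne
  have hbij : Function.Bijective (pick D hB D' h1) := by
    rw [Nat.bijective_iff_injective_and_card]
    refine ⟨pick_inj D hB D' h1, ?_⟩
    have := num_ge D hB D' h1
    have hk' : Nat.card (Fin k) = k := by simp
    rw [hk']
    exact le_antisymm this hn
  obtain ⟨l', hl'⟩ := hbij.2 ⟨(odd' l, 1), by simpa [← h1] using hne.2.symm⟩
  have e : l' = l := by
    rw [← hlf_pick D hB D' h1 l', hl', hlf_odd]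
  subst e
  have h3 : D (evn l') 1 ≠ D' (evn l') 1 := hne.1.symm
  rw [pick, dif_pos h3] at hl'
  have := congrArg (fun q => q.1.1) hl'
  exact odd_ne_evn _ _ this.symm

theorem num_le (D' : Fin (2 * k) → Fin 2 → U) (h0 : ∀ i, D' i 0 = D i 0)
    (h1 : ∀ l, D' (evn l) 1 = D' (odd' l) 1)
    (h : ∀ l, D' (evn l) 1 = D (evn l) 1 ∨ D' (evn l) 1 = D (odd' l) 1) :
    numChanges D D' ≤ k := by
  have : Function.Injective
      (fun p : {p : Fin (2 * k) × Fin 2 // D p.1 p.2 ≠ D' p.1 p.2} => hlf p.1.1) := by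
    rintro ⟨⟨i, a⟩, hi⟩ ⟨⟨j, b⟩, hj⟩ hij
    simp only at hi hj hij
    obtain rfl | rfl : a = 0 ∨ a = 1 := by omega
    · exact absurd (h0 i).symm hi
    obtain rfl | rfl : b = 0 ∨ b = 1 := by omega
    · exact absurd (h0 j).symm hj
    have := h (hlf j)
    have := h1 (hlf j)
    have h5 := evn_or_odd i
    have h6 := evn_or_odd j
    rw [hij] at h5
    simp only [Subtype.mk.injEq, Prod.mk.injEq, and_true]
    generalize hlf j = l at *
    clear hij
    rcases h5 with rfl | rfl <;> rcases h6 with rfl | rfl <;> grind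
  have := Nat.card_le_card_of_injective _ this
  simpa [numChanges] using this

/-- The instance for a choice of one element in each pair. -/
def inst (f : Fin k → Bool) : Fin (2 * k) → Fin 2 → U := fun i a =>
  if a = 0 then D i 0 else if f (hlf i) then D (odd' (hlf i)) 1 else D (evn (hlf i)) 1

theorem mri_iff (hA : ∀ i j : Fin (2 * k), sim 0 0 (D i 0) (D j 0) ↔ hlf i = hlf j)
    (hB : ∀ l : Fin k, D (evn l) 1 ≠ D (odd' l) 1) (D' : Fin (2 * k) → Fin 2 → U) :
    IsMRI sim exM D D' ↔ ∃ f, inst D f = D' := by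
  have hi : ∀ f : Fin k → Bool, (∀ i, inst D f i 0 = D i 0) ∧
      (∀ l, inst D f (evn l) 1 = inst D f (odd' l) 1) ∧ numChanges D (inst D f) ≤ k := by
    intro f
    have a : ∀ i, inst D f i 0 = D i 0 := fun i => by simp [inst]
    have b : ∀ l, inst D f (evn l) 1 = inst D f (odd' l) 1 := fun l => by
      simp [inst, hlf_evn, hlf_odd]
    refine ⟨a, b, num_le D _ a b fun l => ?_⟩
    cases h : f l <;> simp [inst, hlf_evn, h]
  constructor
  · rintro ⟨hr, hm⟩
    obtain ⟨h0, h1⟩ := (resolved_iff sim D hA hB D').1 hr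
    have hn : numChanges D D' ≤ k := by
      obtain ⟨a, b, c⟩ := hi (fun _ => true)
      exact (hm _ ((resolved_iff sim D hA hB _).2 ⟨a, b⟩)).trans c
    have h := num_eq D hB D' h1 hn
    classical
    refine ⟨fun l => decide (D' (evn l) 1 = D (odd' l) 1), ?_⟩
    funext i a
    obtain rfl | rfl : a = 0 ∨ a = 1 := by omega
    · simp [inst, h0]
    · have e : D' i 1 = D' (evn (hlf i)) 1 := by
        rcases evn_or_odd i with h | h
        · rw [← h]
        · rw [h1, ← h]
      rw [e]
      have := h (hlf i)
      simp only [inst, decide_eq_true_eq]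
      grind
  · rintro ⟨f, rfl⟩
    obtain ⟨a, b, c⟩ := hi f
    refine ⟨(resolved_iff sim D hA hB _).2 ⟨a, b⟩, fun D'' h => c.trans ?_⟩
    exact num_ge D hB D'' ((resolved_iff sim D hA hB _).1 h).2

theorem inst_inj (hB : ∀ l : Fin k, D (evn l) 1 ≠ D (odd' l) 1) :
    Function.Injective (inst D) := by
  intro f g h
  funext l
  have := congrFun (congrFun h (evn l)) 1
  have hl := hB l
  have hl' := hl.symm
  simp only [inst, hlf_evn] at this
  cases h1 : f l <;> cases h2 : g l <;> simp [h1, h2, hl, hl'] at this ⊢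

end

/-- Example 4.4: with attributes `α = 0`, `β = 1`, the single MD
`R[α] ≈ R[α] → R[β] ≐ R[β]`, `2k` tuples whose `α`-values are similar exactly
within the pairs `{2l, 2l+1}` and whose `β`-values differ within each pair,
there are exactly `2^k` minimally resolved instances. -/
theorem card_mri_eq_two_pow {U : Type*} (k : ℕ) (hk : 1 ≤ k)
    (sim : Fin 2 → Fin 2 → U → U → Prop)
    (hsym : ∀ (a b : Fin 2) (x y : U), sim a b x y → sim b a y x)
    (hsub : ∀ (a b : Fin 2) (x y : U), x = y → sim a b x y)
    (D : Fin (2 * k) → Fin 2 → U)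
    (hA : ∀ i j : Fin (2 * k), sim 0 0 (D i 0) (D j 0) ↔
      (i = j ∨ ∃ l : ℕ, l < k ∧
        ((i.val = 2 * l ∧ j.val = 2 * l + 1) ∨ (i.val = 2 * l + 1 ∧ j.val = 2 * l))))
    (hB : ∀ (l : ℕ) (h : l < k),
      D ⟨2 * l, by omega⟩ 1 ≠ D ⟨2 * l + 1, by omega⟩ 1) :
    Nat.card {D' : Fin (2 * k) → Fin 2 → U //
      IsMRI sim
        ({⟨({((0 : Fin 2), (0 : Fin 2))} : Finset (Fin 2 × Fin 2)),
           ({((1 : Fin 2), (1 : Fin 2))} : Finset (Fin 2 × Fin 2))⟩} :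
          Finset (MD (Fin 2))) D D'} = 2 ^ k := by
  have hA' : ∀ i j : Fin (2 * k), sim 0 0 (D i 0) (D j 0) ↔ hlf i = hlf j := by
    intro i j
    rw [hA]
    simp only [Fin.ext_iff, hlf]
    constructor
    · rintro (h | ⟨l, hl, h⟩) <;> omega
    · intro h
      by_cases hij : i.val = j.val
      · exact Or.inl hij
      · exact Or.inr ⟨i.val / 2, by omega, by omega⟩
  have hB' : ∀ l : Fin k, D (evn l) 1 ≠ D (odd' l) 1 := fun l => hB l.val l.isLt
  have e := Equiv.ofInjective _ (inst_inj D hB')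
  have e2 := Nat.card_congr e
  rw [Nat.card_eq_fintype_card] at e2
  simp only [Fintype.card_fun, Fintype.card_bool, Fintype.card_fin] at e2
  rw [e2]
  refine Nat.card_congr (Equiv.subtypeEquivRight fun D' => ?_)
  exact mri_iff sim D hA' hB' D'
end

section
/- Let the attribute set be the disjoint union A = Ā ⊔ B̄ of two finite sets, and let M = {m} where L(m) = {(a,a) : a ∈ Ā} with every similarity relation being equality, and R(m) = {(b,b) : b ∈ B̄}. For κ : Ā → U say a tuple t matches κ if D t a = κ a for all a ∈ Ā; κ is a key value of D if some tuple matches it. For a key value κ and b ∈ B̄ let MF(κ,b) be the set of values that are most frequent in the multiset {D t b : t matches κ} (counted with multiplicity). Define R' := {(κ,f) : κ a key value of D, f : B̄ → U with f b ∈ MF(κ,b) for all b ∈ B̄}, and call S ⊆ R' a repair of R' if S contains exactly one pair (κ,f) for each key value κ of D. For an instance D' let tuples(D') := {(D' t restricted to Ā, D' t restricted to B̄) : t ∈ T}. Then {tuples(D') : D' is a minimally resolved instance of D with respect to M} equals the set of repairs of R'. -/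
/-- `t` matches the key value `κ` in `D`. -/
def Matches {T AB BB U : Type*} (D : T → AB ⊕ BB → U) (κ : AB → U) (t : T) : Prop :=
  ∀ a : AB, D t (Sum.inl a) = κ a

/-- `v ∈ MF(κ, b)` : `v` is most frequent in the multiset
`{D t b : t matches κ}`, counted with multiplicity. -/
def MostFreqB {T AB BB U : Type*} (D : T → AB ⊕ BB → U)
    (κ : AB → U) (b : BB) (v : U) : Prop :=
  (∃ t : T, Matches D κ t ∧ D t (Sum.inr b) = v) ∧
  ∀ w : U, Nat.card {t : T // Matches D κ t ∧ D t (Sum.inr b) = w} ≤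
           Nat.card {t : T // Matches D κ t ∧ D t (Sum.inr b) = v}

/-- The transformed relation `R'` of the reduction. -/
def Rprime {T AB BB U : Type*} (D : T → AB ⊕ BB → U) :
    Set ((AB → U) × (BB → U)) :=
  { r | (∃ t : T, Matches D r.1 t) ∧ ∀ b : BB, MostFreqB D r.1 b (r.2 b) }

/-- A repair of `R'`: a subset of `R'` containing exactly one pair `(κ, f)` for
each key value `κ` of `D`. -/
def IsRepair {T AB BB U : Type*} (D : T → AB ⊕ BB → U)
    (S : Set ((AB → U) × (BB → U))) : Prop :=
  S ⊆ Rprime D ∧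
  ∀ κ : AB → U, (∃ t : T, Matches D κ t) → ∃! f : BB → U, (κ, f) ∈ S

/-- The set of (key part, non-key part) tuples of an instance. -/
def tuplesOf {T AB BB U : Type*} (D' : T → AB ⊕ BB → U) :
    Set ((AB → U) × (BB → U)) :=
  { r | ∃ t : T, r = (fun a => D' t (Sum.inl a), fun b => D' t (Sum.inr b)) }

/-- Key part of a tuple. -/
def keyOf {T AB BB U : Type*} (D : T → AB ⊕ BB → U) (t : T) : AB → U :=
  fun a => D t (Sum.inl a)

/-- Explicit description of the resolved instances. -/
def GoodRes {T AB BB U : Type*} (D D' : T → AB ⊕ BB → U) : Prop :=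
  (∀ t a, D' t (Sum.inl a) = D t (Sum.inl a)) ∧
  (∀ t s, keyOf D t = keyOf D s → ∀ b, D' t (Sum.inr b) = D' s (Sum.inr b)) ∧
  (∀ t b, (∀ s, keyOf D s = keyOf D t → D s (Sum.inr b) = D t (Sum.inr b)) →
    D' t (Sum.inr b) = D t (Sum.inr b))

/-- The set consisting of the single MD. -/
abbrev theM (AB BB : Type*) [Fintype AB] [Fintype BB] [DecidableEq AB] [DecidableEq BB] :
    Finset (MD (AB ⊕ BB)) :=
  {⟨Finset.univ.image (fun a : AB => (Sum.inl a, Sum.inl a)),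
    Finset.univ.image (fun b : BB => (Sum.inr b, Sum.inr b))⟩}

theorem matches_iff {T AB BB U : Type*} (D : T → AB ⊕ BB → U) (κ : AB → U) (t : T) :
    Matches D κ t ↔ keyOf D t = κ := by
  unfold Matches keyOf
  exact funext_iff.symm

theorem simPairs_iff {T AB BB U : Type*}
    [Fintype AB] [Fintype BB] [DecidableEq AB] [DecidableEq BB]
    (sim : AB ⊕ BB → AB ⊕ BB → U → U → Prop)
    (heq : ∀ (a : AB) (x y : U), sim (Sum.inl a) (Sum.inl a) x y ↔ x = y)
    (D : T → AB ⊕ BB → U) (t s : T) :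
    simPairs sim (Finset.univ.image (fun a : AB => (Sum.inl a, Sum.inl a))) D t s ↔
      keyOf D t = keyOf D s := by
  unfold simPairs keyOf
  simp [funext_iff, heq]

theorem mod_aux {T AB BB U : Type*}
    [Fintype AB] [Fintype BB] [DecidableEq AB] [DecidableEq BB]
    (sim : AB ⊕ BB → AB ⊕ BB → U → U → Prop)
    (heq : ∀ (a : AB) (x y : U), sim (Sum.inl a) (Sum.inl a) x y ↔ x = y)
    (D : T → AB ⊕ BB → U) (t : T) (c : AB ⊕ BB)
    (h : Modifiable sim (theM AB BB) D t c) :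
    ∃ b, c = Sum.inr b ∧ ∃ s, keyOf D s = keyOf D t ∧ D s (Sum.inr b) ≠ D t (Sum.inr b) := by
  induction h with
  | @left_ne m t s c e hm hr hs hne =>
    obtain rfl := Finset.mem_singleton.1 hm
    have hk := (simPairs_iff sim heq D _ _).1 hs
    simp at hr
    obtain ⟨b, rfl, rfl⟩ := hr
    exact ⟨b, rfl, s, hk.symm, hne.symm⟩
  | @left_mod m t s c e hm hr hs _ ih =>
    obtain rfl := Finset.mem_singleton.1 hm
    have hk := (simPairs_iff sim heq D _ _).1 hs
    simp at hr
    obtain ⟨b, rfl, rfl⟩ := hr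
    obtain ⟨b', hb, s', h1, h2⟩ := ih
    obtain rfl := Sum.inr.inj hb
    by_cases hd : D s (Sum.inr b) = D t (Sum.inr b)
    · exact ⟨b, rfl, s', h1.trans hk.symm, hd ▸ h2⟩
    · exact ⟨b, rfl, s, hk.symm, hd⟩
  | @right_ne m t s c e hm hr hs hne =>
    obtain rfl := Finset.mem_singleton.1 hm
    have hk := (simPairs_iff sim heq D _ _).1 hs
    simp at hr
    obtain ⟨b, rfl, rfl⟩ := hr
    exact ⟨b, rfl, s, hk, hne⟩
  | @right_mod m t s c e hm hr hs _ ih =>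
    obtain rfl := Finset.mem_singleton.1 hm
    have hk := (simPairs_iff sim heq D _ _).1 hs
    simp at hr
    obtain ⟨b, rfl, rfl⟩ := hr
    obtain ⟨b', hb, s', h1, h2⟩ := ih
    obtain rfl := Sum.inr.inj hb
    by_cases hd : D s (Sum.inr b) = D t (Sum.inr b)
    · exact ⟨b, rfl, s', h1.trans hk, hd ▸ h2⟩
    · exact ⟨b, rfl, s, hk, hd⟩

theorem sat_iff {T AB BB U : Type*}
    [Fintype AB] [Fintype BB] [DecidableEq AB] [DecidableEq BB]
    (sim : AB ⊕ BB → AB ⊕ BB → U → U → Prop)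
    (heq : ∀ (a : AB) (x y : U), sim (Sum.inl a) (Sum.inl a) x y ↔ x = y)
    (D D' : T → AB ⊕ BB → U) :
    Sat sim (theM AB BB) D D' ↔ GoodRes D D' := by
  constructor
  · rintro ⟨h1, h2⟩
    refine ⟨fun t a => h2 _ _ fun hm => ?_, fun t s hk b => ?_, fun t b hb => h2 _ _ fun hm => ?_⟩
    · obtain ⟨b, hb, _⟩ := mod_aux sim heq D _ _ hm
      cases hb
    · exact h1 _ (Finset.mem_singleton_self _) t s ((simPairs_iff sim heq D _ _).2 hk)
        (Sum.inr b, Sum.inr b) (by simp)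
    · obtain ⟨b', hb', s, hs, hne⟩ := mod_aux sim heq D _ _ hm
      obtain rfl := Sum.inr.inj hb'
      exact hne (hb s hs)
  · rintro ⟨h1, h2, h3⟩
    refine ⟨fun m hm t s hs p hp => ?_, fun t g hg => ?_⟩
    · obtain rfl := Finset.mem_singleton.1 hm
      have hk := (simPairs_iff sim heq D _ _).1 hs
      simp at hp
      obtain ⟨b, rfl⟩ := hp
      exact h2 t s hk b
    · cases g with
      | inl a => exact h1 t a
      | inr b =>
        refine h3 t b fun s hs => ?_
        by_contra hne
        exact hg (Modifiable.right_ne (m := ⟨_, _⟩) (s := s) (e := Sum.inr b)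
          (Finset.mem_singleton_self _)
          (by simp) ((simPairs_iff sim heq D _ _).2 hs) hne)

theorem GoodRes.key {T AB BB U : Type*} {D D' : T → AB ⊕ BB → U} (h : GoodRes D D') (t : T) :
    keyOf D' t = keyOf D t := funext fun a => h.1 t a

theorem GoodRes.self {T AB BB U : Type*} {D D' : T → AB ⊕ BB → U} (h : GoodRes D D') :
    GoodRes D' D' := by
  refine ⟨fun _ _ => rfl, fun t s hk b => h.2.1 t s ?_ b, fun _ _ _ => rfl⟩
  rwa [h.key, h.key] at hk

theorem GoodRes.eq_of {T AB BB U : Type*} {D D' : T → AB ⊕ BB → U} (hD : GoodRes D D)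
    (h : GoodRes D D') : D' = D := by
  funext t c
  cases c with
  | inl a => exact h.1 t a
  | inr b => exact h.2.2 t b fun s hs => hD.2.1 s t hs b

theorem chain_const {α : Type*} (R : α → α → Prop) (d d' : α)
    (hR : ∀ x, R d x → x = d) : ∀ L : List α, List.IsChain R (d :: (L ++ [d'])) → d' = d := by
  intro L
  induction L with
  | nil => intro h; simp at h; exact hR _ h
  | cons x L ih =>
    intro h
    rw [List.cons_append, List.isChain_cons_cons] at h
    obtain rfl := hR _ h.1
    exact ih h.2

theorem resolved_iff_s12 {T AB BB U : Type*}
    [Fintype AB] [Fintype BB] [DecidableEq AB] [DecidableEq BB]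
    (sim : AB ⊕ BB → AB ⊕ BB → U → U → Prop)
    (heq : ∀ (a : AB) (x y : U), sim (Sum.inl a) (Sum.inl a) x y ↔ x = y)
    (D D' : T → AB ⊕ BB → U) :
    ResolvedInstance sim (theM AB BB) D D' ↔ GoodRes D D' := by
  unfold ResolvedInstance
  constructor
  · rintro ⟨L, hc, -⟩
    have hc : List.IsChain (Sat sim (theM AB BB)) (D :: (L ++ [D'])) := hc
    cases L with
    | nil => simp at hc; exact (sat_iff sim heq _ _).1 hc
    | cons x L =>
      rw [List.cons_append, List.isChain_cons_cons] at hc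
      have hx := (sat_iff sim heq _ _).1 hc.1
      have := chain_const _ x D' (fun y hy => hx.self.eq_of ((sat_iff sim heq _ _).1 hy)) L hc.2
      rw [this]; exact hx
  · intro h
    refine ⟨[], ?_, (sat_iff sim heq _ _).2 h.self⟩
    have : List.IsChain (Sat sim (theM AB BB)) (D :: ([] ++ [D'])) := by
      simp; exact (sat_iff sim heq _ _).2 h
    exact this

/-- Number of tuples with key `κ` and `b`-value `v`. -/
noncomputable def cntB {T AB BB U : Type*} (D : T → AB ⊕ BB → U) (κ : AB → U) (b : BB) (v : U) : ℕ :=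
  Nat.card {t : T // Matches D κ t ∧ D t (Sum.inr b) = v}

open Classical in
/-- Number of unchanged `b`-values among the tuples with key `κ`. -/
noncomputable def agrB {T AB BB U : Type*} [Fintype T] (D D' : T → AB ⊕ BB → U) (p : BB × (AB → U)) : ℕ :=
  (Finset.univ.filter fun t => D t (Sum.inr p.1) = D' t (Sum.inr p.1) ∧ keyOf D t = p.2).card

open Classical in
/-- Index set of the groups. -/
noncomputable def idxB {T AB BB U : Type*} [Fintype T] [Fintype BB] (D : T → AB ⊕ BB → U) :
    Finset (BB × (AB → U)) :=
  Finset.univ ×ˢ Finset.univ.image (keyOf D)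

open Classical in
theorem agr_eq {T AB BB U : Type*} [Fintype T] (D D' : T → AB ⊕ BB → U) (h : GoodRes D D')
    (t : T) (b : BB) : agrB D D' (b, keyOf D t) = cntB D (keyOf D t) b (D' t (Sum.inr b)) := by
  unfold agrB cntB
  rw [Nat.card_eq_fintype_card, Fintype.card_subtype]
  congr 1
  ext s
  simp only [Finset.mem_filter, Finset.mem_univ, true_and, matches_iff]
  constructor
  · rintro ⟨h1, h2⟩
    exact ⟨h2, h1.trans (h.2.1 s t h2 b)⟩
  · rintro ⟨h1, h2⟩
    exact ⟨h2.trans (h.2.1 s t h1 b).symm, h1⟩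

open Classical in
theorem num_add {T AB BB U : Type*} [Fintype T] [Fintype AB] [Fintype BB]
    (D D' : T → AB ⊕ BB → U) (h : GoodRes D D') :
    numChanges D D' + ∑ p ∈ idxB D, agrB D D' p = Fintype.card BB * Fintype.card T := by
  have h1 : numChanges D D' =
      ∑ b : BB, (Finset.univ.filter fun t => ¬ D t (Sum.inr b) = D' t (Sum.inr b)).card := by
    unfold numChanges
    rw [← Finset.card_sigma, Nat.card_eq_fintype_card, Fintype.card_subtype]
    symm
    refine Finset.card_bij (fun x _ => (x.2, Sum.inr x.1)) ?_ ?_ ?_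
    · rintro ⟨b, t⟩ hx
      simpa using hx
    · rintro ⟨b, t⟩ _ ⟨b', t'⟩ _ hh
      simp at hh
      obtain ⟨rfl, rfl⟩ := hh
      rfl
    · rintro ⟨t, c⟩ hx
      simp at hx
      cases c with
      | inl a => exact absurd (h.1 t a).symm hx
      | inr b => exact ⟨⟨b, t⟩, by simpa using hx, rfl⟩
  have h2 : ∑ p ∈ idxB D, agrB D D' p =
      ∑ b : BB, (Finset.univ.filter fun t => D t (Sum.inr b) = D' t (Sum.inr b)).card := by
    unfold idxB agrB
    rw [Finset.sum_product]
    refine Finset.sum_congr rfl fun b _ => ?_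
    rw [Finset.card_eq_sum_card_fiberwise (f := keyOf D) (t := Finset.univ.image (keyOf D))]
    · refine Finset.sum_congr (by ext; simp) fun κ _ => ?_
      rw [Finset.filter_filter]; congr!
    · intro t _
      simp
  rw [h1, h2, ← Finset.sum_add_distrib]
  have : ∀ b : BB, (Finset.univ.filter fun t => ¬ D t (Sum.inr b) = D' t (Sum.inr b)).card +
      (Finset.univ.filter fun t => D t (Sum.inr b) = D' t (Sum.inr b)).card = Fintype.card T := by
    intro b
    rw [add_comm]
    simpa using Finset.card_filter_add_card_filter_not (s := (Finset.univ : Finset T))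
      (fun t => D t (Sum.inr b) = D' t (Sum.inr b))
  simp [this]

theorem cnt_pos {T AB BB U : Type*} [Fintype T] (D : T → AB ⊕ BB → U) (κ : AB → U) (b : BB) (v : U) :
    0 < cntB D κ b v ↔ ∃ t, Matches D κ t ∧ D t (Sum.inr b) = v := by
  unfold cntB
  rw [Nat.card_pos_iff]
  simp only [nonempty_subtype]
  exact ⟨fun h => h.1, fun h => ⟨h, inferInstance⟩⟩

theorem mf_of_max {T AB BB U : Type*} [Fintype T] (D : T → AB ⊕ BB → U) (t : T) (b : BB) (v : U)
    (h : ∀ s, keyOf D s = keyOf D t →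
      cntB D (keyOf D t) b (D s (Sum.inr b)) ≤ cntB D (keyOf D t) b v) :
    MostFreqB D (keyOf D t) b v := by
  constructor
  · rw [← cnt_pos]
    refine lt_of_lt_of_le ?_ (h t rfl)
    rw [cnt_pos]
    exact ⟨t, (matches_iff _ _ _).2 rfl, rfl⟩
  · intro w
    change cntB D (keyOf D t) b w ≤ cntB D (keyOf D t) b v
    rcases Nat.eq_zero_or_pos (cntB D (keyOf D t) b w) with h0 | h0
    · omega
    · obtain ⟨s, hs, rfl⟩ := (cnt_pos _ _ _ _).1 h0
      exact h s ((matches_iff _ _ _).1 hs)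

open Classical in
theorem exists_mf {T AB BB U : Type*} [Fintype T] (D : T → AB ⊕ BB → U) (κ : AB → U) (b : BB)
    (hκ : ∃ t, keyOf D t = κ) : ∃ v, MostFreqB D κ b v := by
  obtain ⟨t, rfl⟩ := hκ
  obtain ⟨s, _, hs⟩ := Finset.exists_max_image
    (Finset.univ.filter fun s => keyOf D s = keyOf D t)
    (fun s => cntB D (keyOf D t) b (D s (Sum.inr b))) ⟨t, by simp⟩
  exact ⟨_, mf_of_max D t b (D s (Sum.inr b)) fun s' h' => hs s' (by simpa using h')⟩

theorem good_of_mf {T AB BB U : Type*} (D : T → AB ⊕ BB → U)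
    (D' : T → AB ⊕ BB → U) (h1 : ∀ t a, D' t (Sum.inl a) = D t (Sum.inl a))
    (h2 : ∀ t s, keyOf D t = keyOf D s → ∀ b, D' t (Sum.inr b) = D' s (Sum.inr b))
    (h3 : ∀ t b, MostFreqB D (keyOf D t) b (D' t (Sum.inr b))) : GoodRes D D' := by
  refine ⟨h1, h2, fun t b hb => ?_⟩
  obtain ⟨s, hs, hv⟩ := (h3 t b).1
  rw [← hv]
  exact hb s ((matches_iff _ _ _).1 hs)

theorem exists_good {T AB BB U : Type*} [Fintype T] (D : T → AB ⊕ BB → U) :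
    ∃ D', GoodRes D D' ∧ ∀ t b, MostFreqB D (keyOf D t) b (D' t (Sum.inr b)) := by
  choose f hf using fun (κ : {κ // ∃ t, keyOf D t = κ}) (b : BB) => exists_mf D κ.1 b κ.2
  let D' : T → AB ⊕ BB → U := fun t => Sum.elim (keyOf D t) (f ⟨keyOf D t, t, rfl⟩)
  have h3 : ∀ t b, MostFreqB D (keyOf D t) b (D' t (Sum.inr b)) := fun t b => hf ⟨keyOf D t, t, rfl⟩ b
  refine ⟨D', good_of_mf D D' (fun _ _ => rfl) (fun t s h b => ?_) h3, h3⟩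
  have : (⟨keyOf D t, t, rfl⟩ : {κ // ∃ t, keyOf D t = κ}) = ⟨keyOf D s, s, rfl⟩ := Subtype.ext h
  change f _ b = f _ b
  rw [this]

theorem agr_le {T AB BB U : Type*} [Fintype T] [Fintype BB] (D D' E : T → AB ⊕ BB → U)
    (h : GoodRes D D') (hE : GoodRes D E)
    (hm : ∀ t b, MostFreqB D (keyOf D t) b (E t (Sum.inr b))) :
    ∀ p ∈ idxB D, agrB D D' p ≤ agrB D E p := by
  classical
  rintro ⟨b, κ⟩ hp
  simp [idxB] at hp
  obtain ⟨t, rfl⟩ := hp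
  rw [agr_eq D D' h, agr_eq D E hE]
  exact (hm t b).2 _

theorem mri_iff_s12 {T AB BB U : Type*} [Fintype T]
    [Fintype AB] [Fintype BB] [DecidableEq AB] [DecidableEq BB]
    (sim : AB ⊕ BB → AB ⊕ BB → U → U → Prop)
    (heq : ∀ (a : AB) (x y : U), sim (Sum.inl a) (Sum.inl a) x y ↔ x = y)
    (D D' : T → AB ⊕ BB → U) :
    IsMRI sim (theM AB BB) D D' ↔
      GoodRes D D' ∧ ∀ t b, MostFreqB D (keyOf D t) b (D' t (Sum.inr b)) := by
  unfold IsMRI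
  simp only [resolved_iff_s12 sim heq]
  refine and_congr_right fun h => ?_
  constructor
  · intro hmin t b
    obtain ⟨E, hE, hm⟩ := exists_good D
    have hle := agr_le D D' E h hE hm
    have e1 := num_add D D' h
    have e2 := num_add D E hE
    have e3 := hmin E hE
    have e4 := Finset.sum_le_sum hle
    have e5 : ∑ p ∈ idxB D, agrB D D' p = ∑ p ∈ idxB D, agrB D E p := by omega
    have e6 := (Finset.sum_eq_sum_iff_of_le hle).1 e5 (b, keyOf D t) (by simp [idxB])
    rw [agr_eq D D' h, agr_eq D E hE] at e6
    refine mf_of_max D t b _ fun s hs => ?_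
    rw [e6]
    exact (hm t b).2 _
  · intro hm E hE
    have hle := agr_le D E D' hE h hm
    have e1 := num_add D D' h
    have e2 := num_add D E hE
    have e4 := Finset.sum_le_sum hle
    omega

/-- Proposition 5.1: for the MD `R[Ā] = R[Ā] → R[B̄] ≐ R[B̄]`, the sets of
tuples of the MRIs of `D` are exactly the repairs of `R'`. -/
theorem mri_tuples_eq_repairs {T AB BB U : Type*}
    [Fintype T] [Fintype AB] [Fintype BB] [DecidableEq AB] [DecidableEq BB]
    (sim : AB ⊕ BB → AB ⊕ BB → U → U → Prop)
    (hsym : ∀ (a b : AB ⊕ BB) (x y : U), sim a b x y → sim b a y x)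
    (hsub : ∀ (a b : AB ⊕ BB) (x y : U), x = y → sim a b x y)
    (heq : ∀ (a : AB) (x y : U), sim (Sum.inl a) (Sum.inl a) x y ↔ x = y)
    (D : T → AB ⊕ BB → U) :
    { S : Set ((AB → U) × (BB → U)) | ∃ D' : T → AB ⊕ BB → U,
        IsMRI sim
          ({⟨Finset.univ.image (fun a : AB => (Sum.inl a, Sum.inl a)),
             Finset.univ.image (fun b : BB => (Sum.inr b, Sum.inr b))⟩} :
            Finset (MD (AB ⊕ BB))) D D' ∧
        S = tuplesOf D' } =
    { S : Set ((AB → U) × (BB → U)) | IsRepair D S } := by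
  ext S
  simp only [Set.mem_ofPred_eq]
  constructor
  · rintro ⟨D', hM, rfl⟩
    obtain ⟨hg, hm⟩ := (mri_iff_s12 sim heq D D').1 hM
    have key : ∀ t, (fun a => D' t (Sum.inl a)) = keyOf D t := hg.key
    refine ⟨?_, ?_⟩
    · rintro r ⟨t, rfl⟩
      simp only [key]
      exact ⟨⟨t, (matches_iff _ _ _).2 rfl⟩, fun b => hm t b⟩
    · rintro κ ⟨t, ht⟩
      obtain rfl := (matches_iff _ _ _).1 ht
      refine ⟨fun b => D' t (Sum.inr b), ⟨t, by rw [key]⟩, ?_⟩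
      rintro f ⟨s, hs⟩
      rw [key, Prod.mk.injEq] at hs
      rw [hs.2]
      funext b
      exact hg.2.1 s t hs.1.symm b
  · rintro ⟨hsubR, hex⟩
    have hex' : ∀ t, ∃! f : BB → U, (keyOf D t, f) ∈ S :=
      fun t => hex _ ⟨t, (matches_iff _ _ _).2 rfl⟩
    choose f hf huniq using hex'
    have h3 : ∀ t b, MostFreqB D (keyOf D t) b (f t b) := fun t b => (hsubR (hf t)).2 b
    refine ⟨fun t => Sum.elim (keyOf D t) (f t), (mri_iff_s12 sim heq D _).2
      ⟨good_of_mf D _ (fun _ _ => rfl) (fun t s h b => ?_) h3, h3⟩, ?_⟩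
    · have : f t = f s := huniq s (f t) (h ▸ hf t)
      exact congrFun this b
    · ext ⟨κ, g⟩
      constructor
      · intro hr
        obtain ⟨t, ht⟩ := (hsubR hr).1
        obtain rfl := (matches_iff _ _ _).1 ht
        refine ⟨t, ?_⟩
        have : g = f t := huniq t g hr
        rw [this]
        rfl
      · rintro ⟨t, ht⟩
        rw [ht]
        exact hf t
end

section
/- Let the attribute set be A = {α, β, γ} and let M = {m} where L(m) = {(α,α)} with a symmetric similarity relation ≈ subsuming equality and R(m) = {(β,β)}. Let T_m be the equivalence relation on T generated by the relation sim_m(D,·,·). Then for all values x, y, z ∈ U, the following are equivalent: (i) for every minimally resolved instance D' of D with respect to M there exists t ∈ T with D' t α = x, D' t β = y and D' t γ = z (i.e., (x,y,z) is a resolved answer to the query returning all tuples of the relation); (ii) there exists s ∈ T with D s α = x and D s γ = z such that for every value y'' ≠ y, the number of tuples u with T_m(s,u) and D u β = y is strictly greater than the number of tuples u with T_m(s,u) and D u β = y''. -/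
namespace RAux

abbrev MM : Finset (MD (Fin 3)) :=
  ({⟨({((0 : Fin 3), (0 : Fin 3))} : Finset (Fin 3 × Fin 3)),
     ({((1 : Fin 3), (1 : Fin 3))} : Finset (Fin 3 × Fin 3))⟩} : Finset (MD (Fin 3)))

abbrev RR {T U : Type*} (sim : Fin 3 → Fin 3 → U → U → Prop) (D : T → Fin 3 → U) : T → T → Prop :=
  fun t₁ t₂ : T => simPairs sim ({((0 : Fin 3), (0 : Fin 3))} : Finset (Fin 3 × Fin 3)) D t₁ t₂

lemma mod_one {T U : Type*} {sim : Fin 3 → Fin 3 → U → U → Prop} {D : T → Fin 3 → U}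
    {t : T} {c : Fin 3} (h : Modifiable sim MM D t c) : c = 1 := by
  cases h <;> simp_all [MM]

lemma chain_fix {T U : Type*} {sim : Fin 3 → Fin 3 → U → U → Prop} (D' : T → Fin 3 → U)
    (l : List (T → Fin 3 → U)) : ∀ (D : T → Fin 3 → U),
    List.Chain (Sat sim MM) D (l ++ [D']) → ∀ t c, c ≠ 1 → D' t c = D t c := by
  induction l with
  | nil =>
    intro D h t c hc
    have h2 : Sat sim MM D D' := by simpa [List.Chain] using h
    exact h2.2 t c (fun hm => hc (mod_one hm))
  | cons a l ih =>
    intro D h t c hc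
    have h2 : Sat sim MM D a ∧ List.Chain (Sat sim MM) a (l ++ [D']) := by
      simpa [List.Chain] using h
    rw [ih a h2.2 t c hc]
    exact h2.1.2 t c (fun hm => hc (mod_one hm))

lemma res_fix {T U : Type*} {sim : Fin 3 → Fin 3 → U → U → Prop} {D D' : T → Fin 3 → U}
    (h : ResolvedInstance sim MM D D') : ∀ t c, c ≠ 1 → D' t c = D t c := by
  obtain ⟨l, hl, _⟩ := h
  exact chain_fix D' l D hl

lemma res_const {T U : Type*} {sim : Fin 3 → Fin 3 → U → U → Prop} {D D' : T → Fin 3 → U}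
    (h : ResolvedInstance sim MM D D') {t u : T} (e : Relation.EqvGen (RR sim D) t u) :
    D' t 1 = D' u 1 := by
  have hf := res_fix h
  obtain ⟨l, hl, hs⟩ := h
  induction e with
  | rel a b hab =>
    refine hs.1 _ (Finset.mem_singleton_self _) a b ?_ (1,1) (by simp)
    intro p hp
    have := hab p hp
    simp only [Finset.mem_singleton] at hp
    subst hp
    simpa [hf _ 0 (by decide)] using this
  | refl => rfl
  | symm _ _ _ ih => exact ih.symm
  | trans _ _ _ _ _ i1 i2 => exact i1.trans i2

lemma nonmod {T U : Type*} {sim : Fin 3 → Fin 3 → U → U → Prop} {D : T → Fin 3 → U}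
    {t u : T} (e : Relation.EqvGen (RR sim D) t u) :
    (¬ Modifiable sim MM D t 1 → ¬ Modifiable sim MM D u 1 ∧ D u 1 = D t 1) ∧
    (¬ Modifiable sim MM D u 1 → ¬ Modifiable sim MM D t 1 ∧ D u 1 = D t 1) := by
  induction e with
  | rel a b hab =>
    have hm : ∀ m : MD (Fin 3), m = ⟨{(0,0)}, {(1,1)}⟩ → m ∈ MM := fun m h => by simp [MM, h]
    constructor
    · intro h
      refine ⟨fun h' => h (.left_mod (hm _ rfl) (by simp) hab h'), ?_⟩
      by_contra hne
      exact h (.left_ne (hm _ rfl) (by simp) hab (fun h => hne h.symm))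
    · intro h
      refine ⟨fun h' => h (.right_mod (hm _ rfl) (by simp) hab h'), ?_⟩
      by_contra hne
      exact h (.right_ne (hm _ rfl) (by simp) hab (fun h => hne h.symm))
  | refl => exact ⟨fun h => ⟨h, rfl⟩, fun h => ⟨h, rfl⟩⟩
  | symm _ _ _ ih =>
    exact ⟨fun h => ⟨(ih.2 h).1, (ih.2 h).2.symm⟩, fun h => ⟨(ih.1 h).1, (ih.1 h).2.symm⟩⟩
  | trans _ _ _ _ _ i1 i2 =>
    refine ⟨fun h => ?_, fun h => ?_⟩
    · have a := i1.1 h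
      have b := i2.1 a.1
      exact ⟨b.1, b.2.trans a.2⟩
    · have a := i2.2 h
      have b := i1.2 a.1
      exact ⟨b.1, a.2.trans b.2⟩

lemma res_mk {T U : Type*} {sim : Fin 3 → Fin 3 → U → U → Prop} {D D' : T → Fin 3 → U}
    (hf : ∀ t c, c ≠ 1 → D' t c = D t c)
    (hc : ∀ t u, Relation.EqvGen (RR sim D) t u → D' t 1 = D' u 1)
    (ho : ∀ t, ∃ u, Relation.EqvGen (RR sim D) t u ∧ D u 1 = D' t 1) :
    ResolvedInstance sim MM D D' := by
  have h1 : Sat sim MM D D' := by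
    constructor
    · intro m hm t₁ t₂ hs p hp
      simp only [MM, Finset.mem_singleton] at hm
      subst hm
      simp only [Finset.mem_singleton] at hp
      subst hp
      exact hc _ _ (.rel _ _ hs)
    · intro t g hg
      by_cases h : g = 1
      · subst h
        obtain ⟨u, e, hu⟩ := ho t
        rw [← hu]
        exact ((nonmod e).1 hg).2
      · exact hf t g h
  refine ⟨[], by simpa [List.Chain] using h1, ?_, fun _ _ _ => rfl⟩
  intro m hm t₁ t₂ hs p hp
  refine h1.1 m hm t₁ t₂ ?_ p hp
  simp only [MM, Finset.mem_singleton] at hm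
  subst hm
  intro q hq
  have := hs q hq
  simp only [Finset.mem_singleton] at hq
  subst hq
  simpa [hf _ 0 (by decide)] using this

noncomputable def cnt {T U : Type*} (sim : Fin 3 → Fin 3 → U → U → Prop) (D : T → Fin 3 → U)
    (s : T) (v : U) : ℕ := Nat.card {u : T // Relation.EqvGen (RR sim D) s u ∧ D u 1 = v}

lemma cnt_congr {T U : Type*} {sim : Fin 3 → Fin 3 → U → U → Prop} {D : T → Fin 3 → U}
    {s t : T} (e : Relation.EqvGen (RR sim D) s t) (v : U) : cnt sim D s v = cnt sim D t v := by
  unfold cnt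
  congr 2
  ext u
  exact and_congr_left fun _ => ⟨fun h => (e.symm).trans _ _ _ h, fun h => e.trans _ _ _ h⟩

lemma changes {T U : Type*} [Fintype T] {D D' : T → Fin 3 → U}
    (hf : ∀ t c, c ≠ 1 → D' t c = D t c) :
    numChanges D D' + Nat.card {t : T // D t 1 = D' t 1} = Nat.card T := by
  classical
  have : numChanges D D' = Nat.card {t : T // ¬ D t 1 = D' t 1} := by
    refine Nat.card_congr ⟨fun p => ⟨p.1.1, ?_⟩, fun t => ⟨(t.1, 1), t.2⟩, ?_, ?_⟩
    · obtain ⟨⟨t, c⟩, h⟩ := p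
      by_cases hc : c = 1
      · subst hc; exact h
      · exact absurd (hf t c hc).symm h
    · rintro ⟨⟨t, c⟩, h⟩
      by_cases hc : c = 1
      · subst hc; rfl
      · exact absurd (hf t c hc).symm h
    · rintro ⟨t, h⟩; rfl
  rw [this]
  simp only [Nat.card_eq_fintype_card]
  have := Fintype.card_subtype_compl (fun t : T => D t 1 = D' t 1)
  have := Fintype.card_subtype_le (fun t : T => D t 1 = D' t 1)
  omega

lemma agr_sum {T U : Type*} [Fintype T] {sim : Fin 3 → Fin 3 → U → U → Prop} {D D' : T → Fin 3 → U}
    [Fintype (Quotient (Relation.EqvGen.setoid (RR sim D)))]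
    (hc : ∀ t u, Relation.EqvGen (RR sim D) t u → D' t 1 = D' u 1) :
    Nat.card {t : T // D t 1 = D' t 1} =
      ∑ q : Quotient (Relation.EqvGen.setoid (RR sim D)), cnt sim D q.out (D' q.out 1) := by
  classical
  unfold cnt
  rw [← Nat.card_sigma]
  have key : ∀ t : T, Relation.EqvGen (RR sim D)
      (Quotient.mk (Relation.EqvGen.setoid (RR sim D)) t).out t := fun t =>
    Quotient.mk_out (s := Relation.EqvGen.setoid (RR sim D)) t
  refine Nat.card_congr ⟨fun t => ⟨Quotient.mk _ t.1, t.1, key _, ?_⟩,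
    fun x => ⟨x.2.1, ?_⟩, ?_, ?_⟩
  · rw [t.2]; exact (hc _ _ (key _)).symm
  · rw [x.2.2.2]; exact hc _ _ x.2.2.1
  · rintro ⟨t, h⟩; rfl
  · rintro ⟨q, u, h1, h2⟩
    have : Quotient.mk (Relation.EqvGen.setoid (RR sim D)) u = q := by
      rw [← Quotient.out_eq q]
      exact Quotient.sound (s := Relation.EqvGen.setoid (RR sim D)) h1.symm
    subst this
    rfl

lemma exists_mode {T U : Type*} [Fintype T] (sim : Fin 3 → Fin 3 → U → U → Prop)
    (D : T → Fin 3 → U) (y : U) (r : T) :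
    ∃ w, (∀ w', cnt sim D r w' ≤ cnt sim D r w) ∧
      (w = y → ∀ y'', y'' ≠ y → cnt sim D r y'' < cnt sim D r y) := by
  classical
  have h0 : ∃ w, ∀ w', cnt sim D r w' ≤ cnt sim D r w := by
    obtain ⟨u, -, hu⟩ := Finset.exists_max_image Finset.univ (fun u => cnt sim D r (D u 1))
      ⟨r, Finset.mem_univ r⟩
    refine ⟨D u 1, fun w' => ?_⟩
    by_cases h : ∃ v, D v 1 = w'
    · obtain ⟨v, rfl⟩ := h
      exact hu v (Finset.mem_univ _)
    · have : cnt sim D r w' = 0 := by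
        unfold cnt
        have : IsEmpty {u : T // Relation.EqvGen (RR sim D) r u ∧ D u 1 = w'} :=
          ⟨fun x => h ⟨x.1, x.2.2⟩⟩
        exact Nat.card_of_isEmpty
      omega
  obtain ⟨w, hw⟩ := h0
  by_cases hs : ∀ y'', y'' ≠ y → cnt sim D r y'' < cnt sim D r y
  · exact ⟨w, hw, fun _ => hs⟩
  · by_cases hwy : w = y
    · push Not at hs
      obtain ⟨y2, h2, h3⟩ := hs
      subst hwy
      exact ⟨y2, fun w' => (hw w').trans h3, fun h => absurd h h2⟩
    · exact ⟨w, hw, fun h => absurd h hwy⟩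

lemma exists_best {T U : Type*} [Fintype T] (sim : Fin 3 → Fin 3 → U → U → Prop)
    (D : T → Fin 3 → U) (y : U) :
    ∃ D' : T → Fin 3 → U, ResolvedInstance sim MM D D' ∧
      (∀ t w, cnt sim D t w ≤ cnt sim D t (D' t 1)) ∧
      (∀ t, D' t 1 = y → ∀ y'', y'' ≠ y → cnt sim D t y'' < cnt sim D t y) := by
  classical
  choose g hg1 hg2 using exists_mode sim D y
  let S := Relation.EqvGen.setoid (RR sim D)
  have key : ∀ t : T, Relation.EqvGen (RR sim D) (Quotient.mk S t).out t := fun t =>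
    Quotient.mk_out (s := S) t
  let D' : T → Fin 3 → U := fun t c => if c = 1 then g (Quotient.mk S t).out else D t c
  have hD1 : ∀ t, D' t 1 = g (Quotient.mk S t).out := fun t => by simp [D']
  have hm : ∀ t w, cnt sim D t w ≤ cnt sim D t (D' t 1) := by
    intro t w
    rw [← cnt_congr (key t), ← cnt_congr (key t), hD1]
    exact hg1 _ _
  refine ⟨D', res_mk ?_ ?_ ?_, hm, ?_⟩
  · intro t c hc; simp [D', hc]
  · intro t u e
    rw [hD1, hD1, Quotient.sound (s := S) e]
  · intro t
    have h1 : 0 < cnt sim D t (D t 1) := by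
      unfold cnt
      have : Nonempty {u : T // Relation.EqvGen (RR sim D) t u ∧ D u 1 = D t 1} :=
        ⟨⟨t, .refl _, rfl⟩⟩
      exact Nat.card_pos
    have h2 := h1.trans_le (hm t _)
    unfold cnt at h2
    obtain ⟨⟨u, hu⟩⟩ := (Nat.card_pos_iff.1 h2).1
    exact ⟨u, hu⟩
  · intro t ht y2 h2
    rw [← cnt_congr (key t), ← cnt_congr (key t)]
    exact hg2 _ (by rw [← hD1, ht]) _ h2

end RAux

/-- Correctness of the rewriting of Example 4.5: `(x, y, z)` is a resolved
answer to the query returning all tuples of `R[α, β, γ]` wrt the MD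
`R[α] ≈ R[α] → R[β] ≐ R[β]` iff there is a tuple `s` with `D s α = x`,
`D s γ = z` such that `y` is strictly most frequent as a `β`-value in the
`T_m`-equivalence class of `s`. -/
theorem resolved_answer_iff_count {T U : Type*} [Fintype T]
    (sim : Fin 3 → Fin 3 → U → U → Prop)
    (hsym : ∀ (a b : Fin 3) (x y : U), sim a b x y → sim b a y x)
    (hsub : ∀ (a b : Fin 3) (x y : U), x = y → sim a b x y)
    (D : T → Fin 3 → U) (x y z : U) :
    (∀ D' : T → Fin 3 → U,
        IsMRI sim
          ({⟨({((0 : Fin 3), (0 : Fin 3))} : Finset (Fin 3 × Fin 3)),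
             ({((1 : Fin 3), (1 : Fin 3))} : Finset (Fin 3 × Fin 3))⟩} :
            Finset (MD (Fin 3))) D D' →
        ∃ t : T, D' t 0 = x ∧ D' t 1 = y ∧ D' t 2 = z) ↔
      (∃ s : T, D s 0 = x ∧ D s 2 = z ∧
        ∀ y'' : U, y'' ≠ y →
          Nat.card {u : T //
            Relation.EqvGen (fun t₁ t₂ : T =>
              simPairs sim ({((0 : Fin 3), (0 : Fin 3))} : Finset (Fin 3 × Fin 3)) D t₁ t₂)
              s u ∧ D u 1 = y''} <
          Nat.card {u : T //
            Relation.EqvGen (fun t₁ t₂ : T =>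
              simPairs sim ({((0 : Fin 3), (0 : Fin 3))} : Finset (Fin 3 × Fin 3)) D t₁ t₂)
              s u ∧ D u 1 = y}) := by
  classical
  obtain ⟨B, hB, hBm, hBs⟩ := RAux.exists_best sim D y
  letI : Fintype (Quotient (Relation.EqvGen.setoid (RAux.RR sim D))) := Fintype.ofFinite _
  constructor
  · intro h
    obtain ⟨t, h0, h1, h2⟩ := h B ⟨hB, by
      intro D2 hD2
      have a := RAux.changes (RAux.res_fix hB)
      have b := RAux.changes (RAux.res_fix hD2)
      rw [RAux.agr_sum (fun t u => RAux.res_const hB)] at a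
      rw [RAux.agr_sum (fun t u => RAux.res_const hD2)] at b
      have := Finset.sum_le_sum (s := Finset.univ)
        (fun (q : Quotient (Relation.EqvGen.setoid (RAux.RR sim D))) _ =>
          hBm q.out (D2 q.out 1))
      omega⟩
    refine ⟨t, ?_, ?_, hBs t h1⟩
    · rw [← h0, RAux.res_fix hB t 0 (by decide)]
    · rw [← h2, RAux.res_fix hB t 2 (by decide)]
  · rintro ⟨s, h0, h2, hs⟩ D' ⟨hD', hmin⟩
    refine ⟨s, ?_, ?_, ?_⟩
    · rw [← h0, RAux.res_fix hD' s 0 (by decide)]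
    · by_contra hne
      have hlt : RAux.cnt sim D s (D' s 1) < RAux.cnt sim D s y := hs _ hne
      have a := RAux.changes (RAux.res_fix hB)
      have b := RAux.changes (RAux.res_fix hD')
      rw [RAux.agr_sum (fun t u => RAux.res_const hB)] at a
      rw [RAux.agr_sum (fun t u => RAux.res_const hD')] at b
      have key : Relation.EqvGen (RAux.RR sim D)
          (Quotient.mk (Relation.EqvGen.setoid (RAux.RR sim D)) s).out s :=
        Quotient.mk_out (s := Relation.EqvGen.setoid (RAux.RR sim D)) s
      have := Finset.sum_lt_sum (s := Finset.univ)
        (fun (q : Quotient (Relation.EqvGen.setoid (RAux.RR sim D))) _ =>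
          hBm q.out (D' q.out 1))
        ⟨Quotient.mk _ s, Finset.mem_univ _, by
          rw [RAux.cnt_congr key, RAux.cnt_congr key, RAux.res_const hD' key,
            RAux.res_const hB key]
          exact hlt.trans_le (hBm s y)⟩
      have := hmin B hB
      omega
    · rw [← h2, RAux.res_fix hD' s 2 (by decide)]
end
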